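/- Let p > 0, let λ be a Koshliakov sequence for p, let x > 0, and let s ∈ ℂ with Re(s) > 1. Then ∑_{n=1}^∞ w_n·λ_n^{s−1/2}·K_{s−1/2}(2πλ_n x) = −(π^{1/2−s}·x^{1/2−s}/4)·Γ(s − 1/2)/(1 + 1/(πp)) + Γ(s)·π^{−s}·x^{−s−1/2}/4 + π·∫₀^∞ y^{s−1/2}·J_{s−1/2}(2πxy)/(σ(y)·e^{2πy} − 1) dy. -/

import Mathlib

/-!
The proof rests on the partial fraction expansion, for `y > 0`,

  `π / (σ(y) e^{2πy} - 1) + π/2 - w₀ / (2y) = ∑ w_n y / (y² + λ_n²)`,  `w₀ = 1 / (1 + 1/(πp))`,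

which is integrated against `y^ν J_ν(Xy)`, where `ν = s - 1/2` and `X = 2πx`.

*Partial fractions* (`IsKosh.hasSum_koshG`). The entire function
`koshD p z = p sin πz + z cos πz` vanishes exactly at `0` and the points `±λ_n`, and
`koshN / koshD`, the analogue of `π cot πz`, has simple poles there with residues `w₀` and `w_n`.
It is bounded on the boundary of the square of half-side `N`, uniformly in large `N`. Removing the
polar parts at the poles inside the square leaves an odd holomorphic function, bounded there by
`O(1) + 2 ∑_{k<N} 1/(k+δ) = o(N)`, because `n - λ_n ≥ δ > 0`. An odd function vanishes at the
origin, so the Schwarz lemma shows that the remainder tends to `0` pointwise. The expansion is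
read off at `z = iy`.

*Laplace transform* (`integral_exp_besj`). The Laplace transform of `y^ν J_ν(Xy)` at `t > 0` is
`φ(t) = (2X)^ν Γ(s) π^{-1/2} (t² + X²)^{-s}`. Poisson's integral and the Gamma integral along a
complex ray reduce this to the fact that
`(1+ε²)^s ∫_{-1}^1 (1-u²)^{s-1} (1+iεu)^{-2s} du` does not depend on `ε`, which is seen by
differentiating in `ε`.

*Basset's formula* (`integral_cos_mul_lapPhi`). The cosine transform of `φ` at `l > 0` is
`l^ν K_ν(lX)`. Writing `(t²+X²)^{-s}` as a Gamma integral of Gaussians on one side, and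
`e^{-lXt}` by the subordination formula on the other, turns both into the same integral `bassetR`.

*Conclusion*. Since `y / (y² + l²) = ∫₀^∞ e^{-yt} cos(lt) dt`, integrating
`y / (y² + l²)` against `e^{-εy} y^ν J_ν(Xy)` gives the cosine transform of `φ(· + ε)`
(`cosPhi_eq_integral`). The damping factor `e^{-εy}` makes termwise integration of the partial
fraction expansion legitimate (`IsKosh.hasSum_cosPhi`). Two integrations by parts bound the
cosine transforms by `K / l²` uniformly in `ε`, so `ε → 0+` can be taken inside the sum
(`IsKosh.tsum_cosPhi`). The terms `π/2` and `w₀ / (2y)` produce the values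
`(π/2) φ(0)` and `(w₀/2) ∫ φ`, which are the two Gamma terms of the formula.
-/

/-- The modified Bessel function of the second kind `K_ν(z)` for real `z > 0` and
complex order `ν` with `Re ν > -1/2`, defined by its standard integral representation. -/
noncomputable def besselK (ν : ℂ) (z : ℝ) : ℂ :=
  (Real.sqrt Real.pi : ℂ) * ((z / 2 : ℝ) : ℂ) ^ ν / Complex.Gamma (ν + 1 / 2) *
    ∫ t in Set.Ioi (1 : ℝ), Complex.exp (-(z * t)) * ((t ^ 2 - 1 : ℝ) : ℂ) ^ (ν - 1 / 2)

/-- The Bessel function of the first kind `J_ν(z)` for real `z` and complex order `ν`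
with `Re ν > -1/2`, defined by Poisson's integral representation. -/
noncomputable def besselJ (ν : ℂ) (z : ℝ) : ℂ :=
  2 * ((z / 2 : ℝ) : ℂ) ^ ν / ((Real.sqrt Real.pi : ℂ) * Complex.Gamma (ν + 1 / 2)) *
    ∫ u in (0 : ℝ)..1, ((1 - u ^ 2 : ℝ) : ℂ) ^ (ν - 1 / 2) * (Real.cos (z * u) : ℂ)

section

open Complex Filter Topology Set MeasureTheory

/-! ### Zeros of the characteristic function -/

/-- Entire function whose zeros are `0` and the points `±λ_n`. -/
noncomputable def koshD (p : ℝ) (z : ℂ) : ℂ :=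
  p * Complex.sin (Real.pi * z) + z * Complex.cos (Real.pi * z)

/-- Numerator of `koshN / koshD`, the analogue of `π cot (π z)`. -/
noncomputable def koshN (p : ℝ) (z : ℂ) : ℂ :=
  Real.pi * (p * Complex.cos (Real.pi * z) - z * Complex.sin (Real.pi * z))

/-- The weight `w` as a function of `λ`. -/
noncomputable def koshW (p t : ℝ) : ℝ := (p ^ 2 + t ^ 2) / (p * (p + 1 / Real.pi) + t ^ 2)

/-- A function whose singularities in `K` are all removable has an extension that is holomorphic at
every point of `K`. -/
lemma exists_removable {f : ℂ → ℂ} {K : Set ℂ}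
    (h : ∀ a ∈ K, ∃ g : ℂ → ℂ, AnalyticAt ℂ g a ∧ f =ᶠ[𝓝[≠] a] g) :
    ∃ F : ℂ → ℂ, (∀ a ∈ K, DifferentiableAt ℂ F a) ∧
      (∀ a ∈ K, ContinuousAt f a → F a = f a) ∧ (∀ a ∈ K, Tendsto f (𝓝[≠] a) (𝓝 (F a))) := by
  have key : ∀ (a : ℂ) (g : ℂ → ℂ), ContinuousAt g a → f =ᶠ[𝓝[≠] a] g →
      Tendsto f (𝓝[≠] a) (𝓝 (g a)) := by
    intro a g hg hfg
    exact (hg.tendsto.mono_left nhdsWithin_le_nhds).congr' hfg.symm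
  refine ⟨fun a => limUnder (𝓝[≠] a) f, ?_, ?_, ?_⟩
  · intro a ha
    obtain ⟨g, hg, hfg⟩ := h a ha
    refine hg.differentiableAt.congr_of_eventuallyEq ?_
    have h1 : ∀ᶠ b in 𝓝 a, ContinuousAt g b := hg.eventually_analyticAt.mono
      (fun b hb => hb.continuousAt)
    have h2 : ∀ᶠ b in 𝓝 a, f =ᶠ[𝓝[≠] b] g := by
      have h3 := eventually_nhdsWithin_iff.1 hfg
      filter_upwards [h3.eventually_nhds] with b hb
      by_cases hba : b = a
      · rw [hba]; exact hfg
      · have : ∀ᶠ c in 𝓝 b, c ≠ a := isOpen_ne.mem_nhds hba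
        have h4 : ∀ᶠ c in 𝓝 b, f c = g c := by
          filter_upwards [hb, this] with c hc hca using hc hca
        exact h4.filter_mono nhdsWithin_le_nhds
    filter_upwards [h1, h2] with b hb1 hb2
    exact (key b g hb1 hb2).limUnder_eq
  · intro a ha hc
    exact (hc.tendsto.mono_left nhdsWithin_le_nhds).limUnder_eq
  · intro a ha
    obtain ⟨g, hg, hfg⟩ := h a ha
    have := key a g hg.continuousAt hfg
    simpa only [this.limUnder_eq] using this

lemma koshD_analyticAt (p : ℝ) (z : ℂ) : AnalyticAt ℂ (koshD p) z := by
  have : Differentiable ℂ (koshD p) := by unfold koshD; fun_prop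
  exact this.analyticAt z

lemma koshN_analyticAt (p : ℝ) (z : ℂ) : AnalyticAt ℂ (koshN p) z := by
  have : Differentiable ℂ (koshN p) := by unfold koshN; fun_prop
  exact this.analyticAt z

lemma koshD_neg (p : ℝ) (z : ℂ) : koshD p (-z) = -koshD p z := by
  simp [koshD]; ring

lemma koshN_neg (p : ℝ) (z : ℂ) : koshN p (-z) = koshN p z := by
  simp [koshN]

lemma sin_pi_mul_re_im (z : ℂ) : Complex.sin (Real.pi * z) =
    ((Real.sin (Real.pi * z.re) * Real.cosh (Real.pi * z.im) : ℝ) : ℂ) +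
    ((Real.cos (Real.pi * z.re) * Real.sinh (Real.pi * z.im) : ℝ) : ℂ) * I := by
  conv_lhs => rw [← re_add_im z, mul_add, ← mul_assoc, Complex.sin_add_mul_I]
  push_cast; ring

lemma cos_pi_mul_re_im (z : ℂ) : Complex.cos (Real.pi * z) =
    ((Real.cos (Real.pi * z.re) * Real.cosh (Real.pi * z.im) : ℝ) : ℂ) -
    ((Real.sin (Real.pi * z.re) * Real.sinh (Real.pi * z.im) : ℝ) : ℂ) * I := by
  conv_lhs => rw [← re_add_im z, mul_add, ← mul_assoc, Complex.cos_add_mul_I]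
  push_cast; ring

/-- All zeros of `koshD` are real: if `koshD p z = 0` with `z = a + ib`, then
`p sinh(πb) cosh(πb) + b |cos πz|² = 0`, where both summands have the sign of `b`. -/
lemma koshD_zero_im {p : ℝ} (hp : 0 < p) {z : ℂ} (hz : koshD p z = 0) : z.im = 0 := by
  rw [koshD, sin_pi_mul_re_im, cos_pi_mul_re_im] at hz
  have hre := congrArg re hz
  have him := congrArg im hz
  simp only [add_re, sub_re, mul_re, add_im, sub_im, mul_im, ofReal_re, ofReal_im, I_re, I_im,
    zero_re, zero_im] at hre him
  set a := z.re
  set b := z.im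
  set sA := Real.sin (Real.pi * a)
  set cA := Real.cos (Real.pi * a)
  have hsc : sA ^ 2 + cA ^ 2 = 1 := Real.sin_sq_add_cos_sq _
  have hch : 0 < Real.cosh (Real.pi * b) := Real.cosh_pos _
  have key : p * (Real.sinh (Real.pi * b) * Real.cosh (Real.pi * b)) +
      b * ((cA * Real.cosh (Real.pi * b)) ^ 2 + (sA * Real.sinh (Real.pi * b)) ^ 2) = 0 := by
    linear_combination (cA * Real.cosh (Real.pi * b)) * him +
      (sA * Real.sinh (Real.pi * b)) * hre -
      p * (Real.sinh (Real.pi * b) * Real.cosh (Real.pi * b)) * hsc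
  rcases lt_trichotomy b 0 with hb | hb | hb
  · have : Real.sinh (Real.pi * b) < 0 := Real.sinh_neg_iff.2 (by nlinarith [Real.pi_pos])
    have h1 : p * (Real.sinh (Real.pi * b) * Real.cosh (Real.pi * b)) < 0 :=
      mul_neg_of_pos_of_neg hp (mul_neg_of_neg_of_pos this hch)
    have h2 : b * ((cA * Real.cosh (Real.pi * b)) ^ 2 + (sA * Real.sinh (Real.pi * b)) ^ 2) ≤ 0 :=
      mul_nonpos_of_nonpos_of_nonneg hb.le (by positivity)
    linarith
  · exact hb
  · have : 0 < Real.sinh (Real.pi * b) := Real.sinh_pos_iff.2 (by positivity)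
    have h1 : 0 < p * (Real.sinh (Real.pi * b) * Real.cosh (Real.pi * b)) := by positivity
    have h2 : 0 ≤ b * ((cA * Real.cosh (Real.pi * b)) ^ 2 + (sA * Real.sinh (Real.pi * b)) ^ 2) :=
      by positivity
    linarith

lemma koshD_ofReal (p t : ℝ) : koshD p t =
    ((p * Real.sin (Real.pi * t) + t * Real.cos (Real.pi * t) : ℝ) : ℂ) := by
  simp [koshD]

/-- At a real zero of `koshD` the derivative is nonzero and `koshN` is `w` times it, so that
`koshN / koshD` has a simple pole with residue `w`. -/
lemma koshD_residue {p : ℝ} (hp : 0 < p) {t : ℝ} (ht : koshD p t = 0) :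
    deriv (koshD p) t ≠ 0 ∧ koshN p t = koshW p t * deriv (koshD p) t := by
  have hder : deriv (koshD p) t = ((p * Real.pi * Real.cos (Real.pi * t) + Real.cos (Real.pi * t)
      - Real.pi * t * Real.sin (Real.pi * t) : ℝ) : ℂ) := by
    have h0 : HasDerivAt (fun z : ℂ => (Real.pi : ℂ) * z) Real.pi (t : ℂ) := by
      simpa using (hasDerivAt_id (t : ℂ)).const_mul (Real.pi : ℂ)
    have h1 := ((Complex.hasDerivAt_sin _).comp (t : ℂ) h0).const_mul (p : ℂ)
    have h2 := (hasDerivAt_id (t : ℂ)).mul ((Complex.hasDerivAt_cos _).comp (t : ℂ) h0)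
    have h3 := h1.add h2
    have h4 : HasDerivAt (koshD p) _ (t : ℂ) := h3
    rw [h4.deriv]
    simp
    ring
  rw [koshD_ofReal] at ht
  have ht' : p * Real.sin (Real.pi * t) + t * Real.cos (Real.pi * t) = 0 := by exact_mod_cast ht
  have hsc := Real.sin_sq_add_cos_sq (Real.pi * t)
  have hN : koshN p t = ((Real.pi * (p * Real.cos (Real.pi * t) - t * Real.sin (Real.pi * t)) : ℝ) : ℂ) := by
    simp [koshN]
  have hpi := Real.pi_pos
  rw [hder, hN]
  set S := Real.sin (Real.pi * t)
  set C := Real.cos (Real.pi * t)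
  have hS : S = -(t * C) / p := by field_simp; linarith
  have hC : C ≠ 0 := by
    intro h
    rw [h] at hS hsc
    simp at hS; rw [hS] at hsc; simp at hsc
  have hD : p * Real.pi * C + C - Real.pi * t * S = C / p * (Real.pi * (p * (p + 1 / Real.pi) + t ^ 2)) := by
    rw [hS]; field_simp; ring
  have hpos : 0 < p * (p + 1 / Real.pi) + t ^ 2 := by positivity
  constructor
  · rw [hD]
    norm_cast
    positivity
  · rw [hD, koshW]
    norm_cast
    rw [hS]; field_simp; ring

/-- The defining conditions of a Koshliakov sequence for `p`. -/
def IsKosh (p : ℝ) (lam : ℕ → ℝ) : Prop :=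
  ∀ n : ℕ, 1 ≤ n → (n : ℝ) - 1 / 2 < lam n ∧ lam n < n ∧
      Real.tan (Real.pi * lam n) = -(lam n) / p

lemma tan_pi_sub_nat (a : ℝ) (n : ℕ) : Real.tan (Real.pi * (a - n)) = Real.tan (Real.pi * a) := by
  have := Real.tan_sub_nat_mul_pi (Real.pi * a) n
  rw [← this]; congr 1; ring

lemma IsKosh.cos_ne {p : ℝ} {lam : ℕ → ℝ} (h : IsKosh p lam) {n : ℕ} (hn : 1 ≤ n) :
    Real.cos (Real.pi * lam n) ≠ 0 := by
  obtain ⟨h1, h2, h3⟩ := h n hn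
  have hpi := Real.pi_pos
  have : 0 < Real.cos (Real.pi * lam n - n * Real.pi) :=
    Real.cos_pos_of_mem_Ioo ⟨by nlinarith, by nlinarith⟩
  rw [Real.cos_sub_nat_mul_pi] at this
  intro h0
  rw [h0] at this
  simp at this

lemma IsKosh.pos {p : ℝ} {lam : ℕ → ℝ} (h : IsKosh p lam) {n : ℕ} (hn : 1 ≤ n) : 1 / 2 < lam n := by
  have h1 := (h n hn).1
  have : (1 : ℝ) ≤ n := by exact_mod_cast hn
  linarith

lemma IsKosh.koshD_eq {p : ℝ} (hp : 0 < p) {lam : ℕ → ℝ} (h : IsKosh p lam) {n : ℕ} (hn : 1 ≤ n) :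
    koshD p (lam n) = 0 := by
  have hc := h.cos_ne hn
  have h3 := (h n hn).2.2
  rw [Real.tan_eq_sin_div_cos, div_eq_div_iff hc hp.ne'] at h3
  rw [koshD_ofReal]
  norm_cast
  linarith

/-- The distance from `λ_n` to `n` is bounded below: it equals `arctan(λ_n / p) / π`, and
`λ_n > 1/2`. -/
lemma IsKosh.gap {p : ℝ} (hp : 0 < p) {lam : ℕ → ℝ} (h : IsKosh p lam) :
    ∃ δ : ℝ, 0 < δ ∧ ∀ n : ℕ, 1 ≤ n → δ ≤ n - lam n := by
  have hpi := Real.pi_pos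
  refine ⟨Real.arctan (1 / (2 * p)) / Real.pi, ?_, ?_⟩
  · have : 0 < Real.arctan (1 / (2 * p)) := Real.arctan_pos.2 (by positivity)
    positivity
  · intro n hn
    obtain ⟨h1, h2, h3⟩ := h n hn
    have h4 : Real.tan (Real.pi * (n - lam n)) = lam n / p := by
      rw [show Real.pi * (n - lam n) = -(Real.pi * (lam n - n)) by ring, Real.tan_neg,
        tan_pi_sub_nat, h3]
      ring
    have h5 : Real.arctan (lam n / p) = Real.pi * (n - lam n) := by
      rw [← h4]
      exact Real.arctan_tan (by nlinarith) (by nlinarith)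
    have h6 : Real.arctan (1 / (2 * p)) ≤ Real.arctan (lam n / p) := by
      apply Real.arctan_mono
      rw [div_le_div_iff₀ (by positivity) hp]
      have := h.pos hn
      nlinarith
    rw [div_le_iff₀ hpi]
    linarith

/-- Every positive real zero of `koshD` is one of the `λ_n`. -/
lemma IsKosh.zero_pos {p : ℝ} (hp : 0 < p) {lam : ℕ → ℝ} (h : IsKosh p lam) {a : ℝ} (ha : 0 < a)
    (hz : koshD p a = 0) : ∃ n : ℕ, 1 ≤ n ∧ a = lam n := by
  have hpi := Real.pi_pos
  rw [koshD_ofReal] at hz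
  have hz' : p * Real.sin (Real.pi * a) + a * Real.cos (Real.pi * a) = 0 := by exact_mod_cast hz
  have hc : Real.cos (Real.pi * a) ≠ 0 := by
    intro h0
    have h1 := Real.sin_sq_add_cos_sq (Real.pi * a)
    rw [h0] at hz' h1
    have h2 : Real.sin (Real.pi * a) = 0 := by
      rcases mul_eq_zero.1 (show p * Real.sin (Real.pi * a) = 0 by linarith) with h | h
      · exact absurd h hp.ne'
      · exact h
    rw [h2] at h1; norm_num at h1
  have htan : Real.tan (Real.pi * a) = -a / p := by
    rw [Real.tan_eq_sin_div_cos, div_eq_div_iff hc hp.ne']; linarith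
  -- `n` is the integer nearest to `a`
  set n := ⌊a + 1 / 2⌋₊ with hn
  have hn1 : (n : ℝ) ≤ a + 1 / 2 := Nat.floor_le (by linarith)
  have hn2 : a + 1 / 2 < n + 1 := Nat.lt_floor_add_one _
  have hn3 : (n : ℝ) - 1 / 2 < a := by
    rcases eq_or_lt_of_le hn1 with h1 | h1
    · exfalso
      apply hc
      rw [Real.cos_eq_zero_iff]
      refine ⟨(n : ℤ) - 1, ?_⟩
      push_cast
      have : a = n - 1 / 2 := by linarith
      rw [this]; ring
    · linarith
  have htan' := tan_pi_sub_nat a n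
  rcases Nat.eq_zero_or_pos n with h0 | h0
  · exfalso
    rw [h0] at hn2
    have : 0 < Real.tan (Real.pi * a) :=
      Real.tan_pos_of_pos_of_lt_pi_div_two (by positivity) (by norm_num at hn2; nlinarith)
    rw [htan] at this
    have h2 : -a / p < 0 := div_neg_of_neg_of_pos (by linarith) hp
    linarith
  · refine ⟨n, h0, ?_⟩
    obtain ⟨h1, h2, h3⟩ := h n h0
    have hl := tan_pi_sub_nat (lam n) n
    have mono : ∀ u v : ℝ, (n : ℝ) - 1 / 2 < u → u < v → v < n + 1 / 2 →
        Real.tan (Real.pi * (u - n)) < Real.tan (Real.pi * (v - n)) := by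
      intro u v hu huv hv
      exact Real.tan_lt_tan_of_lt_of_lt_pi_div_two (by nlinarith) (by nlinarith) (by nlinarith)
    rw [h3] at hl
    rw [htan] at htan'
    rcases lt_trichotomy a (lam n) with hlt | heq | hgt
    · have := mono _ _ hn3 hlt (by linarith)
      rw [hl, htan', div_lt_div_iff_of_pos_right hp] at this
      linarith
    · exact heq
    · have := mono _ _ h1 hgt (by linarith)
      rw [hl, htan', div_lt_div_iff_of_pos_right hp] at this
      linarith

lemma koshW_nonneg {p : ℝ} (hp : 0 < p) (t : ℝ) : 0 ≤ koshW p t := by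
  have := Real.pi_pos
  unfold koshW; positivity

lemma koshW_le_one {p : ℝ} (hp : 0 < p) (t : ℝ) : koshW p t ≤ 1 := by
  have := Real.pi_pos
  unfold koshW
  rw [div_le_one (by positivity)]
  have : 0 < p * (1 / Real.pi) := by positivity
  nlinarith

lemma koshW_neg (p t : ℝ) : koshW p (-t) = koshW p t := by simp [koshW]

/-- The poles of `koshN / koshD` in the square of half-side `N`. -/
noncomputable def koshPoles (lam : ℕ → ℝ) (N : ℕ) : Finset ℝ :=
  insert 0 ((Finset.Icc 1 N).image lam ∪ (Finset.Icc 1 N).image (fun n => -lam n))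

lemma mem_koshPoles {lam : ℕ → ℝ} {N : ℕ} {t : ℝ} : t ∈ koshPoles lam N ↔
    t = 0 ∨ ∃ n, (1 ≤ n ∧ n ≤ N) ∧ (t = lam n ∨ t = -lam n) := by
  simp only [koshPoles, Finset.mem_insert, Finset.mem_union, Finset.mem_image, Finset.mem_Icc]
  constructor
  · rintro (h | ⟨n, hn, h⟩ | ⟨n, hn, h⟩)
    · exact Or.inl h
    · exact Or.inr ⟨n, hn, Or.inl h.symm⟩
    · exact Or.inr ⟨n, hn, Or.inr h.symm⟩
  · rintro (h | ⟨n, hn, h | h⟩)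
    · exact Or.inl h
    · exact Or.inr (Or.inl ⟨n, hn, h.symm⟩)
    · exact Or.inr (Or.inr ⟨n, hn, h.symm⟩)

lemma IsKosh.poles_zero {p : ℝ} (hp : 0 < p) {lam : ℕ → ℝ} (h : IsKosh p lam) {N : ℕ} {t : ℝ}
    (ht : t ∈ koshPoles lam N) : koshD p t = 0 := by
  rcases mem_koshPoles.1 ht with h0 | ⟨n, hn, h1 | h1⟩
  · simp [h0, koshD]
  · rw [h1]; exact h.koshD_eq hp hn.1
  · rw [h1, ofReal_neg, koshD_neg, h.koshD_eq hp hn.1, neg_zero]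

lemma IsKosh.zero_mem {p : ℝ} (hp : 0 < p) {lam : ℕ → ℝ} (h : IsKosh p lam) {N : ℕ} {z : ℂ}
    (hz : koshD p z = 0) (hN : |z.re| ≤ N) : ∃ t ∈ koshPoles lam N, z = (t : ℂ) := by
  have him := koshD_zero_im hp hz
  have hzr : z = (z.re : ℂ) := by apply Complex.ext <;> simp [him]
  have hle : ∀ n : ℕ, 1 ≤ n → lam n ≤ N → n ≤ N := by
    intro n hn hl
    have h1 := (h n hn).1
    have : (n : ℝ) < N + 1 := by linarith
    exact_mod_cast (Nat.lt_succ_iff.1 (by exact_mod_cast this))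
  refine ⟨z.re, ?_, hzr⟩
  rw [mem_koshPoles]
  rw [hzr] at hz
  rcases lt_trichotomy z.re 0 with h0 | h0 | h0
  · obtain ⟨n, hn, hl⟩ := h.zero_pos hp (a := -z.re) (by linarith)
      (by rw [ofReal_neg, koshD_neg, hz, neg_zero])
    rw [abs_of_neg h0] at hN
    exact Or.inr ⟨n, ⟨hn, hle n hn (by linarith)⟩, Or.inr (by linarith)⟩
  · exact Or.inl h0
  · obtain ⟨n, hn, hl⟩ := h.zero_pos hp h0 hz
    rw [abs_of_pos h0] at hN
    exact Or.inr ⟨n, ⟨hn, hle n hn (by linarith)⟩, Or.inl hl⟩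

lemma IsKosh.sum_poles {p : ℝ} {lam : ℕ → ℝ} (h : IsKosh p lam) (N : ℕ) {M : Type*}
    [AddCommMonoid M] (f : ℝ → M) :
    ∑ t ∈ koshPoles lam N, f t = f 0 + ∑ n ∈ Finset.range N, (f (lam (n + 1)) + f (-lam (n + 1))) := by
  have hinj : Set.InjOn lam (Finset.Icc 1 N : Finset ℕ) := by
    have aux : ∀ m n : ℕ, 1 ≤ m → 1 ≤ n → lam m = lam n → m ≤ n := by
      intro m n hm hn hmn
      have h1 := (h m hm).1
      have h2 := (h n hn).2.1
      have : (m : ℝ) < n + 1 := by linarith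
      exact Nat.lt_succ_iff.1 (by exact_mod_cast this)
    intro m hm n hn hmn
    simp at hm hn
    exact le_antisymm (aux m n hm.1 hn.1 hmn) (aux n m hn.1 hm.1 hmn.symm)
  have hinj' : Set.InjOn (fun n => -lam n) (Finset.Icc 1 N : Finset ℕ) := by
    intro m hm n hn hmn
    exact hinj hm hn (neg_injective hmn)
  have hdisj : Disjoint ((Finset.Icc 1 N).image lam) ((Finset.Icc 1 N).image (fun n => -lam n)) := by
    rw [Finset.disjoint_left]
    intro a ha hb
    simp only [Finset.mem_image, Finset.mem_Icc] at ha hb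
    obtain ⟨m, hm, rfl⟩ := ha
    obtain ⟨n, hn, hmn⟩ := hb
    have := h.pos hm.1
    have := h.pos hn.1
    linarith
  have h0 : (0 : ℝ) ∉ (Finset.Icc 1 N).image lam ∪ (Finset.Icc 1 N).image (fun n => -lam n) := by
    simp only [Finset.mem_union, Finset.mem_image, Finset.mem_Icc, not_or]
    constructor
    · rintro ⟨n, hn, h1⟩
      have := h.pos hn.1
      linarith
    · rintro ⟨n, hn, h1⟩
      have := h.pos hn.1
      linarith
  rw [koshPoles, Finset.sum_insert h0, Finset.sum_union hdisj, Finset.sum_image hinj,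
    Finset.sum_image hinj', ← Finset.sum_add_distrib]
  congr 1
  rw [Finset.range_eq_Ico, Finset.sum_Ico_add' (fun n => f (lam n) + f (-lam n)) 0 N 1]
  rfl

/-! ### The partial fraction expansion -/

/-- `koshN / koshD` with the polar parts at `0, ±λ_1, …, ±λ_N` removed. -/
noncomputable def koshR (p : ℝ) (lam : ℕ → ℝ) (N : ℕ) (z : ℂ) : ℂ :=
  koshN p z / koshD p z - ∑ t ∈ koshPoles lam N, (koshW p t : ℂ) / (z - t)

lemma analyticAt_dslope {f : ℂ → ℂ} {a : ℂ} (h : AnalyticAt ℂ f a) :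
    AnalyticAt ℂ (dslope f a) a := by
  obtain ⟨q, hq⟩ := h
  exact ⟨_, hq.has_fpower_series_dslope_fslope⟩

lemma analyticAt_polar_sum (p : ℝ) (S : Finset ℝ) {a : ℂ} (ha : ∀ t ∈ S, a ≠ (t : ℂ)) :
    AnalyticAt ℂ (fun z => ∑ t ∈ S, (koshW p t : ℂ) / (z - t)) a := by
  apply Finset.analyticAt_fun_sum
  intro t ht
  exact analyticAt_const.div (analyticAt_id.sub analyticAt_const) (sub_ne_zero.2 (ha t ht))

lemma IsKosh.analyticAt_koshR {p : ℝ} (hp : 0 < p) {lam : ℕ → ℝ} (h : IsKosh p lam) (N : ℕ) {a : ℂ}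
    (ha : koshD p a ≠ 0) : AnalyticAt ℂ (koshR p lam N) a := by
  refine ((koshN_analyticAt p a).div (koshD_analyticAt p a) ha).sub (analyticAt_polar_sum p _ ?_)
  intro t ht h1
  exact ha (by rw [h1]; exact h.poles_zero hp ht)

/-- All singularities of `koshR` in the strip `|Re z| ≤ N` are removable. -/
lemma IsKosh.koshR_removable {p : ℝ} (hp : 0 < p) {lam : ℕ → ℝ} (h : IsKosh p lam) (N : ℕ) {a : ℂ}
    (ha : |a.re| ≤ N) : ∃ g : ℂ → ℂ, AnalyticAt ℂ g a ∧ koshR p lam N =ᶠ[𝓝[≠] a] g := by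
  by_cases hD : koshD p a = 0
  · obtain ⟨t, ht, rfl⟩ := h.zero_mem hp hD ha
    obtain ⟨hd, hN⟩ := koshD_residue hp hD
    set E := dslope (koshD p) (t : ℂ) with hE
    have hEa : AnalyticAt ℂ E t := analyticAt_dslope (koshD_analyticAt p t)
    have hE0 : E t ≠ 0 := by rw [hE, dslope_same]; exact hd
    set Q : ℂ → ℂ := fun z => koshN p z / E z with hQ
    have hQa : AnalyticAt ℂ Q t := (koshN_analyticAt p t).div hEa hE0
    have hQt : Q t = koshW p t := by
      simp only [hQ]
      rw [hN, hE, dslope_same, mul_div_cancel_right₀ _ hd]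
    refine ⟨fun z => dslope Q t z - ∑ u ∈ (koshPoles lam N).erase t, (koshW p u : ℂ) / (z - u),
      (analyticAt_dslope hQa).sub (analyticAt_polar_sum p _ ?_), ?_⟩
    · intro u hu h1
      exact (Finset.ne_of_mem_erase hu) (by exact_mod_cast h1.symm)
    · have hEne : ∀ᶠ z in 𝓝[≠] (t : ℂ), E z ≠ 0 :=
        (hEa.continuousAt.eventually_ne hE0).filter_mono nhdsWithin_le_nhds
      filter_upwards [hEne, self_mem_nhdsWithin] with z hz hzt
      have hzt' : z ≠ t := hzt
      have hsub : z - t ≠ 0 := sub_ne_zero.2 hzt'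
      have hDz : koshD p z = (z - t) * E z := by
        rw [hE, dslope_of_ne _ hzt', slope_def_field, hD, sub_zero]
        field_simp
      rw [koshR, ← Finset.add_sum_erase _ _ ht, dslope_of_ne _ hzt', slope_def_field, hQt, hDz]
      simp only [hQ]
      field_simp
      ring
  · exact ⟨_, h.analyticAt_koshR hp N hD, EventuallyEq.rfl⟩

lemma norm_sin_le_cos_boundary {N : ℕ} (hN : 1 ≤ N) {z : ℂ} (hz : |z.re| = N ∨ |z.im| = N) :
    Complex.cos (Real.pi * z) ≠ 0 ∧
      ‖Complex.sin (Real.pi * z)‖ ≤ 2 * ‖Complex.cos (Real.pi * z)‖ := by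
  have hpi := Real.pi_gt_three
  have hN' : (1 : ℝ) ≤ N := by exact_mod_cast hN
  have hs : ‖Complex.sin (Real.pi * z)‖ ^ 2 =
      Real.sin (Real.pi * z.re) ^ 2 + Real.sinh (Real.pi * z.im) ^ 2 := by
    rw [sin_pi_mul_re_im, ← normSq_eq_norm_sq, normSq_add_mul_I]
    have h1 := Real.sin_sq_add_cos_sq (Real.pi * z.re)
    have h2 := Real.cosh_sq (Real.pi * z.im)
    rw [mul_pow, mul_pow, h2]
    linear_combination (Real.sinh (Real.pi * z.im) ^ 2) * h1
  have hc : ‖Complex.cos (Real.pi * z)‖ ^ 2 =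
      Real.cos (Real.pi * z.re) ^ 2 + Real.sinh (Real.pi * z.im) ^ 2 := by
    rw [cos_pi_mul_re_im, sub_eq_add_neg, ← neg_mul, ← ofReal_neg, ← normSq_eq_norm_sq,
      normSq_add_mul_I]
    have h1 := Real.sin_sq_add_cos_sq (Real.pi * z.re)
    have h2 := Real.cosh_sq (Real.pi * z.im)
    rw [neg_sq, mul_pow, mul_pow, h2]
    linear_combination (Real.sinh (Real.pi * z.im) ^ 2) * h1
  have h1 := Real.sin_sq_add_cos_sq (Real.pi * z.re)
  have key : 0 < ‖Complex.cos (Real.pi * z)‖ ^ 2 ∧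
      ‖Complex.sin (Real.pi * z)‖ ^ 2 ≤ (2 * ‖Complex.cos (Real.pi * z)‖) ^ 2 := by
    rw [mul_pow, hs, hc]
    rcases hz with hz | hz
    · have h0 : Real.sin (Real.pi * z.re) = 0 := by
        rcases abs_choice z.re with h2 | h2
        · rw [h2] at hz; rw [hz, mul_comm]; exact Real.sin_nat_mul_pi N
        · have : z.re = -N := by linarith
          rw [this, mul_neg, Real.sin_neg, mul_comm, Real.sin_nat_mul_pi, neg_zero]
      rw [h0] at h1 ⊢
      constructor <;> nlinarith [sq_nonneg (Real.sinh (Real.pi * z.im))]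
    · have h2 : 1 ≤ Real.sinh (Real.pi * z.im) ^ 2 := by
        have h3 : 1 ≤ |Real.sinh (Real.pi * z.im)| := by
          rw [Real.abs_sinh, abs_mul, hz, abs_of_pos (by linarith)]
          have : (Real.pi * N) ≤ Real.sinh (Real.pi * N) := Real.self_le_sinh_iff.2 (by positivity)
          nlinarith
        rw [← sq_abs]; nlinarith
      constructor <;> nlinarith [sq_nonneg (Real.cos (Real.pi * z.re))]
  refine ⟨?_, ?_⟩
  · intro h0
    rw [h0] at key
    simp at key
  · exact (abs_le_of_sq_le_sq' key.2 (by positivity)).2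

/-- `koshN / koshD` is bounded on the boundary of the square of half-side `N`, uniformly in
`N ≥ max 1 (4p)`. -/
lemma koshH_boundary {p : ℝ} (hp : 0 < p) {N : ℕ} (hN : 1 ≤ N) (hNp : 4 * p ≤ N) {z : ℂ}
    (hz : |z.re| = N ∨ |z.im| = N) :
    koshD p z ≠ 0 ∧ ‖koshN p z / koshD p z‖ ≤ 5 * Real.pi := by
  obtain ⟨hc, hs⟩ := norm_sin_le_cos_boundary hN hz
  have hpi := Real.pi_pos
  have hN' : (1 : ℝ) ≤ N := by exact_mod_cast hN
  have hzN : (N : ℝ) ≤ ‖z‖ := by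
    rcases hz with hz | hz
    · rw [← hz]; exact abs_re_le_norm z
    · rw [← hz]; exact abs_im_le_norm z
  have hc0 : 0 < ‖Complex.cos (Real.pi * z)‖ := norm_pos_iff.2 hc
  have hD : ‖z‖ / 2 * ‖Complex.cos (Real.pi * z)‖ ≤ ‖koshD p z‖ := by
    have h1 : ‖z * Complex.cos (Real.pi * z)‖ - ‖(p : ℂ) * Complex.sin (Real.pi * z)‖ ≤
        ‖koshD p z‖ := by
      have := norm_sub_norm_le (z * Complex.cos (Real.pi * z)) (-((p : ℂ) * Complex.sin (Real.pi * z)))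
      rw [norm_neg, sub_neg_eq_add, add_comm (z * _)] at this
      exact this
    rw [norm_mul, norm_mul, norm_real, Real.norm_of_nonneg hp.le] at h1
    have h2 : p * ‖Complex.sin (Real.pi * z)‖ ≤ p * (2 * ‖Complex.cos (Real.pi * z)‖) := by gcongr
    nlinarith
  have hNn : ‖koshN p z‖ ≤ 5 * Real.pi * (‖z‖ / 2 * ‖Complex.cos (Real.pi * z)‖) := by
    rw [koshN, norm_mul, norm_real, Real.norm_of_nonneg hpi.le]
    have h1 := norm_sub_le ((p : ℂ) * Complex.cos (Real.pi * z)) (z * Complex.sin (Real.pi * z))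
    rw [norm_mul, norm_mul, norm_real, Real.norm_of_nonneg hp.le] at h1
    have h2 : ‖z‖ * ‖Complex.sin (Real.pi * z)‖ ≤ ‖z‖ * (2 * ‖Complex.cos (Real.pi * z)‖) := by gcongr
    have h3 : p * ‖Complex.cos (Real.pi * z)‖ ≤ (‖z‖ / 2) * ‖Complex.cos (Real.pi * z)‖ := by
      gcongr; linarith
    have h4 : ‖(p : ℂ) * Complex.cos (Real.pi * z) - z * Complex.sin (Real.pi * z)‖ ≤
        5 * (‖z‖ / 2 * ‖Complex.cos (Real.pi * z)‖) := by nlinarith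
    calc _ ≤ Real.pi * (5 * (‖z‖ / 2 * ‖Complex.cos (Real.pi * z)‖)) := by gcongr
      _ = _ := by ring
  have hz0 : 0 < ‖z‖ := by linarith
  have hDpos : 0 < ‖koshD p z‖ := lt_of_lt_of_le (by positivity) hD
  refine ⟨norm_pos_iff.1 hDpos, ?_⟩
  rw [norm_div, div_le_iff₀ hDpos]
  refine hNn.trans ?_
  gcongr

/-- On the boundary of the square of half-side `N` the pole `±λ_n` is at distance at least
`N - n + δ`, so each polar part is at most `1 / (N - n + δ)`. -/
lemma IsKosh.koshR_boundary {p : ℝ} (hp : 0 < p) {lam : ℕ → ℝ} (h : IsKosh p lam) {δ : ℝ}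
    (hδ : 0 < δ) (hgap : ∀ n : ℕ, 1 ≤ n → δ ≤ n - lam n) {N : ℕ} (hN : 1 ≤ N) (hNp : 4 * p ≤ N)
    {z : ℂ} (hz : |z.re| = N ∨ |z.im| = N) :
    ‖koshR p lam N z‖ ≤ 5 * Real.pi + (1 + 2 * ∑ k ∈ Finset.range N, 1 / ((k : ℝ) + δ)) := by
  have hN' : (1 : ℝ) ≤ N := by exact_mod_cast hN
  have hzN : (N : ℝ) ≤ ‖z‖ := by
    rcases hz with hz | hz
    · rw [← hz]; exact abs_re_le_norm z
    · rw [← hz]; exact abs_im_le_norm z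
  have term : ∀ t : ℝ, ∀ c : ℝ, 0 < c → c ≤ N - |t| → ‖(koshW p t : ℂ) / (z - t)‖ ≤ 1 / c := by
    intro t c hc hct
    have h1 : c ≤ ‖z - t‖ := by
      have := norm_sub_norm_le z (t : ℂ)
      rw [norm_real, Real.norm_eq_abs] at this
      linarith
    rw [norm_div, norm_real, Real.norm_of_nonneg (koshW_nonneg hp t)]
    exact div_le_div₀ zero_le_one (koshW_le_one hp t) hc h1
  rw [koshR]
  refine (norm_sub_le _ _).trans (add_le_add (koshH_boundary hp hN hNp hz).2 ?_)
  refine (norm_sum_le _ _).trans ?_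
  rw [h.sum_poles]
  refine add_le_add ?_ ?_
  · simpa using term 0 1 one_pos (by simpa using hN')
  · rw [← Finset.sum_range_reflect (fun k => 1 / ((k : ℝ) + δ)), Finset.mul_sum]
    apply Finset.sum_le_sum
    intro n hn
    have hn' : n + 1 ≤ N := Finset.mem_range.1 hn
    have hcast : ((N - 1 - n : ℕ) : ℝ) = N - (n + 1) := by
      rw [Nat.sub_sub, Nat.cast_sub (by omega)]; push_cast; ring
    have hg := hgap (n + 1) (by omega)
    have hpos := h.pos (n := n + 1) (by omega)
    have hb : 0 < ((N - 1 - n : ℕ) : ℝ) + δ := by positivity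
    have hle : ((N - 1 - n : ℕ) : ℝ) + δ ≤ N - lam (n + 1) := by
      rw [hcast]; push_cast at hg; linarith
    have t1 := term (lam (n + 1)) _ hb (by rw [abs_of_pos (by linarith)]; exact hle)
    have t2 := term (-lam (n + 1)) _ hb (by rw [abs_neg, abs_of_pos (by linarith)]; exact hle)
    linarith

lemma koshR_neg (p : ℝ) {lam : ℕ → ℝ} (h : IsKosh p lam) (N : ℕ) (z : ℂ) :
    koshR p lam N (-z) = -koshR p lam N z := by
  have : ∀ t : ℝ, (koshW p t : ℂ) / (-z - t) = -((koshW p (-t) : ℂ) / (z - (-t : ℝ))) := by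
    intro t
    rw [koshW_neg, ofReal_neg, sub_neg_eq_add, show -z - (t : ℂ) = -(z + t) by ring, div_neg]
  rw [koshR, koshR, koshD_neg, koshN_neg, h.sum_poles, h.sum_poles, this 0,
    Finset.sum_congr rfl (fun n _ => by rw [this, this, neg_neg])]
  simp only [neg_zero, div_neg, ← neg_add, Finset.sum_neg_distrib]
  rw [Finset.sum_congr rfl (fun n _ => add_comm _ _)]
  ring

/-- The Schwarz lemma in the disc of radius `N` for the holomorphic extension of `koshR`, which
vanishes at `0` because `koshR` is odd, and which the maximum principle bounds in the square. -/
lemma IsKosh.koshR_le {p : ℝ} (hp : 0 < p) {lam : ℕ → ℝ} (h : IsKosh p lam) {δ : ℝ}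
    (hδ : 0 < δ) (hgap : ∀ n : ℕ, 1 ≤ n → δ ≤ n - lam n) {N : ℕ} (hN : 1 ≤ N) (hNp : 4 * p ≤ N)
    {z : ℂ} (hz : ‖z‖ < N) (hDz : koshD p z ≠ 0) :
    ‖koshR p lam N z‖ ≤
      (5 * Real.pi + (1 + 2 * ∑ k ∈ Finset.range N, 1 / ((k : ℝ) + δ))) / N * ‖z‖ := by
  set M := 5 * Real.pi + (1 + 2 * ∑ k ∈ Finset.range N, 1 / ((k : ℝ) + δ)) with hM
  have hN' : (1 : ℝ) ≤ N := by exact_mod_cast hN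
  obtain ⟨F, hF1, hF2, hF3⟩ := exists_removable (f := koshR p lam N)
    (K := {a : ℂ | |a.re| ≤ N}) (fun a ha => h.koshR_removable hp N ha)
  set U : Set ℂ := Ioo (-(N : ℝ)) N ×ℂ Ioo (-(N : ℝ)) N with hU
  have hcl : closure U = Icc (-(N : ℝ)) N ×ℂ Icc (-(N : ℝ)) N := by
    rw [hU, closure_reProdIm, closure_Ioo (by linarith)]
  have hop : IsOpen U := isOpen_Ioo.reProdIm isOpen_Ioo
  have hclK : ∀ a ∈ closure U, |a.re| ≤ N := by
    intro a ha
    rw [hcl, mem_reProdIm] at ha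
    exact abs_le.2 ha.1
  have hdc : DiffContOnCl ℂ F U :=
    DifferentiableOn.diffContOnCl (fun a ha => (hF1 a (hclK a ha)).differentiableWithinAt)
  have hbd : Bornology.IsBounded U := (Metric.isBounded_Ioo _ _).reProdIm (Metric.isBounded_Ioo _ _)
  have hval : ∀ a : ℂ, |a.re| ≤ N → koshD p a ≠ 0 → F a = koshR p lam N a :=
    fun a ha hD => hF2 a ha (h.analyticAt_koshR hp N hD).continuousAt
  have hfr : ∀ a ∈ frontier U, ‖F a‖ ≤ M := by
    intro a ha
    rw [hop.frontier_eq] at ha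
    have h1 := ha.1
    have h2 := ha.2
    have h3 := hclK a h1
    rw [hcl, mem_reProdIm] at h1
    have hb : |a.re| = N ∨ |a.im| = N := by
      by_contra hcon
      push Not at hcon
      apply h2
      rw [hU, mem_reProdIm]
      exact ⟨abs_lt.1 (lt_of_le_of_ne (abs_le.2 h1.1) hcon.1),
        abs_lt.1 (lt_of_le_of_ne (abs_le.2 h1.2) hcon.2)⟩
    rw [hval a h3 (koshH_boundary hp hN hNp hb).1]
    exact h.koshR_boundary hp hδ hgap hN hNp hb
  have hbound : ∀ a ∈ U, ‖F a‖ ≤ M := fun a ha =>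
    Complex.norm_le_of_forall_mem_frontier_norm_le hbd hdc hfr (subset_closure ha)
  have hball : Metric.ball (0 : ℂ) N ⊆ U := by
    intro a ha
    rw [mem_ball_zero_iff] at ha
    rw [hU, mem_reProdIm]
    exact ⟨abs_lt.1 (lt_of_le_of_lt (abs_re_le_norm a) ha),
      abs_lt.1 (lt_of_le_of_lt (abs_im_le_norm a) ha)⟩
  have hF0 : F 0 = 0 := by
    have h1 := hF3 0 (by simp)
    have h2 : Tendsto (fun z : ℂ => -z) (𝓝[≠] 0) (𝓝[≠] 0) := by
      apply tendsto_nhdsWithin_of_tendsto_nhds_of_eventually_within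
      · have : Tendsto (fun z : ℂ => -z) (𝓝 0) (𝓝 (-0)) := continuous_neg.tendsto 0
        rw [neg_zero] at this
        exact this.mono_left nhdsWithin_le_nhds
      · filter_upwards [self_mem_nhdsWithin] with z hz
        simpa using hz
    have h3 := h1.comp h2
    have h4 : Tendsto (fun z => -koshR p lam N z) (𝓝[≠] 0) (𝓝 (F 0)) := by
      refine h3.congr (fun z => ?_)
      simp [koshR_neg p h]
    have h5 := tendsto_nhds_unique h4 h1.neg
    have h6 : (2 : ℂ) * F 0 = 0 := by linear_combination h5
    simpa using h6
  have hzre : |z.re| ≤ N := (abs_re_le_norm z).trans hz.le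
  have := Complex.dist_le_div_mul_dist_of_mapsTo_ball (f := F) (c := 0) (R₁ := N) (R₂ := M) (z := z)
    (fun a ha => (hF1 a (hclK a (subset_closure (hball ha)))).differentiableWithinAt)
    (fun a ha => by rw [hF0, mem_closedBall_zero_iff]; exact hbound a (hball ha))
    (by rwa [mem_ball_zero_iff])
  rw [hF0, dist_zero_right, dist_zero_right, hval z hzre hDz] at this
  exact this

lemma IsKosh.koshR_tendsto {p : ℝ} (hp : 0 < p) {lam : ℕ → ℝ} (h : IsKosh p lam) {z : ℂ}
    (hDz : koshD p z ≠ 0) : Tendsto (fun N => koshR p lam N z) atTop (𝓝 0) := by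
  obtain ⟨δ, hδ, hgap⟩ := h.gap hp
  have hces : Tendsto (fun N : ℕ => (N : ℝ)⁻¹ * ∑ k ∈ Finset.range N, 1 / ((k : ℝ) + δ)) atTop
      (𝓝 0) := by
    apply Filter.Tendsto.cesaro
    exact tendsto_const_nhds.div_atTop
      (tendsto_atTop_add_const_right _ _ tendsto_natCast_atTop_atTop)
  have hinv : Tendsto (fun N : ℕ => (N : ℝ)⁻¹) atTop (𝓝 0) := tendsto_inv_atTop_nhds_zero_nat
  have hlim : Tendsto (fun N : ℕ =>
      (5 * Real.pi + (1 + 2 * ∑ k ∈ Finset.range N, 1 / ((k : ℝ) + δ))) / N * ‖z‖) atTop (𝓝 0) := by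
    have := ((hinv.mul_const (5 * Real.pi + 1)).add (hces.const_mul 2)).mul_const ‖z‖
    simp only [zero_mul, mul_zero, add_zero] at this
    refine this.congr (fun N => ?_)
    ring
  refine squeeze_zero_norm' ?_ hlim
  obtain ⟨N₀, hN₀⟩ := exists_nat_gt (max (4 * p) ‖z‖)
  filter_upwards [eventually_ge_atTop (max 1 N₀)] with N hN
  have h1 : (N₀ : ℝ) ≤ N := by exact_mod_cast (le_max_right _ _).trans hN
  exact h.koshR_le hp hδ hgap ((le_max_left _ _).trans hN)
    ((le_max_left _ _).trans (hN₀.le.trans h1)) (lt_of_lt_of_le ((le_max_right _ _).trans_lt hN₀) h1)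
    hDz

/-- The function `1 / (σ(y) e^{2πy} - 1)` in pole-free form. -/
noncomputable def koshG (p y : ℝ) : ℝ :=
  (p - y) * Real.exp (-(Real.pi * y)) /
    (2 * (p * Real.sinh (Real.pi * y) + y * Real.cosh (Real.pi * y)))

lemma koshG_eq {p y : ℝ} (hp : 0 < p) (hy : 0 < y) (hpy : y ≠ p) :
    1 / ((p + y) / (p - y) * Real.exp (2 * Real.pi * y) - 1) = koshG p y := by
  have hpi := Real.pi_pos
  have h1 : p - y ≠ 0 := sub_ne_zero.2 hpy.symm
  have hs : 0 < Real.sinh (Real.pi * y) := Real.sinh_pos_iff.2 (by positivity)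
  have hD : 0 < p * Real.sinh (Real.pi * y) + y * Real.cosh (Real.pi * y) := by
    have := Real.cosh_pos (Real.pi * y)
    positivity
  have key : (p + y) / (p - y) * Real.exp (2 * Real.pi * y) - 1 =
      (2 * (p * Real.sinh (Real.pi * y) + y * Real.cosh (Real.pi * y))) * Real.exp (Real.pi * y)
        / (p - y) := by
    rw [Real.sinh_eq, Real.cosh_eq, show 2 * Real.pi * y = Real.pi * y + Real.pi * y by ring,
      Real.exp_add, Real.exp_neg]
    have := (Real.exp_pos (Real.pi * y)).ne'
    field_simp
    ring
  rw [key, koshG, Real.exp_neg]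
  have := (Real.exp_pos (Real.pi * y)).ne'
  field_simp

lemma abs_koshG_le {p y : ℝ} (hp : 0 < p) (hy : 0 < y) :
    |koshG p y| ≤ Real.exp (-(Real.pi * y)) / (2 * Real.pi * y) := by
  have hpi := Real.pi_pos
  have hs : Real.pi * y ≤ Real.sinh (Real.pi * y) := Real.self_le_sinh_iff.2 (by positivity)
  have hc : Real.sinh (Real.pi * y) ≤ Real.cosh (Real.pi * y) := (Real.sinh_lt_cosh _).le
  have hpy : 0 < Real.pi * y := by positivity
  have hle : (p + y) * (Real.pi * y) ≤ p * Real.sinh (Real.pi * y) + y * Real.cosh (Real.pi * y) := by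
    nlinarith
  have hab : |p - y| ≤ p + y := by rw [abs_le]; constructor <;> linarith
  have hD : 0 < 2 * (p * Real.sinh (Real.pi * y) + y * Real.cosh (Real.pi * y)) := by
    have : 0 < (p + y) * (Real.pi * y) := by positivity
    linarith
  rw [koshG, abs_div, abs_mul, abs_of_pos (Real.exp_pos _), abs_of_pos hD,
    div_le_div_iff₀ hD (by positivity)]
  have he := Real.exp_pos (-(Real.pi * y))
  calc |p - y| * Real.exp (-(Real.pi * y)) * (2 * Real.pi * y)
      ≤ (p + y) * Real.exp (-(Real.pi * y)) * (2 * Real.pi * y) := by gcongr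
    _ = Real.exp (-(Real.pi * y)) * (2 * ((p + y) * (Real.pi * y))) := by ring
    _ ≤ _ := by gcongr

/-- Partial fraction expansion of `1 / (σ(y) e^{2πy} - 1)`. -/
lemma IsKosh.hasSum_koshG {p : ℝ} (hp : 0 < p) {lam : ℕ → ℝ} (h : IsKosh p lam) {y : ℝ} (hy : 0 < y) :
    HasSum (fun n : ℕ => koshW p (lam (n + 1)) * (y / (y ^ 2 + lam (n + 1) ^ 2)))
      (Real.pi * koshG p y + Real.pi / 2 - koshW p 0 / 2 * (1 / y)) := by
  have hpi := Real.pi_pos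
  have hs : 0 < Real.sinh (Real.pi * y) := Real.sinh_pos_iff.2 (by positivity)
  have hch := Real.cosh_pos (Real.pi * y)
  have hDpos : 0 < p * Real.sinh (Real.pi * y) + y * Real.cosh (Real.pi * y) := by positivity
  have hD : koshD p (y * I) =
      ((p * Real.sinh (Real.pi * y) + y * Real.cosh (Real.pi * y) : ℝ) : ℂ) * I := by
    rw [koshD, ← mul_assoc, Complex.sin_mul_I, Complex.cos_mul_I]; push_cast; ring
  have hN : koshN p (y * I) =
      ((Real.pi * (p * Real.cosh (Real.pi * y) + y * Real.sinh (Real.pi * y)) : ℝ) : ℂ) := by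
    rw [koshN, ← mul_assoc, Complex.sin_mul_I, Complex.cos_mul_I]; push_cast
    linear_combination (-(Real.pi : ℂ) * y * Complex.sinh (Real.pi * y)) * I_mul_I
  have hDne : koshD p (y * I) ≠ 0 := by
    rw [hD]
    exact mul_ne_zero (ofReal_ne_zero.2 hDpos.ne') I_ne_zero
  have hlim := h.koshR_tendsto hp hDne
  rw [hasSum_iff_tendsto_nat_of_nonneg]
  · set A := Real.pi * koshG p y + Real.pi / 2 - koshW p 0 / 2 * (1 / y) with hA
    have hA' : A = Real.pi * (p * Real.cosh (Real.pi * y) + y * Real.sinh (Real.pi * y)) /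
        (2 * (p * Real.sinh (Real.pi * y) + y * Real.cosh (Real.pi * y)))
        - koshW p 0 / 2 * (1 / y) := by
      rw [hA, koshG]
      congr 1
      rw [eq_div_iff (by positivity)]
      have he : Real.exp (-(Real.pi * y)) = Real.cosh (Real.pi * y) - Real.sinh (Real.pi * y) :=
        (Real.cosh_sub_sinh _).symm
      rw [he]
      field_simp
      ring
    have hR : ∀ N, koshR p lam N (y * I) = ((-2 * (A - ∑ i ∈ Finset.range N,
        koshW p (lam (i + 1)) * (y / (y ^ 2 + lam (i + 1) ^ 2))) : ℝ) : ℂ) * I := by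
      intro N
      rw [koshR, h.sum_poles, hD, hN, hA']
      have hterm : ∀ i, (koshW p (lam (i + 1)) : ℂ) / (y * I - (lam (i + 1) : ℝ)) +
          (koshW p (-lam (i + 1)) : ℂ) / (y * I - (-lam (i + 1) : ℝ)) =
          ((-2 * (koshW p (lam (i + 1)) * (y / (y ^ 2 + lam (i + 1) ^ 2))) : ℝ) : ℂ) * I := by
        intro i
        set l := lam (i + 1)
        have hsum : (y : ℂ) ^ 2 + (l : ℂ) ^ 2 ≠ 0 := by
          norm_cast; positivity
        have h1 : (y : ℂ) * I - l ≠ 0 := by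
          intro h0
          have := congrArg im h0
          simp at this; exact hy.ne' this
        have h2 : (y : ℂ) * I + l ≠ 0 := by
          intro h0
          have := congrArg im h0
          simp at this; exact hy.ne' this
        rw [koshW_neg]
        push_cast
        rw [sub_neg_eq_add, div_add_div _ _ h1 h2]
        rw [show ((y : ℂ) * I - l) * (y * I + l) = -(y ^ 2 + l ^ 2) by
          linear_combination (y : ℂ) ^ 2 * I_mul_I]
        field_simp
        ring
      rw [Finset.sum_congr rfl (fun i _ => hterm i), ← Finset.sum_mul, ← ofReal_sum,
        ← Finset.mul_sum]
      set D := p * Real.sinh (Real.pi * y) + y * Real.cosh (Real.pi * y)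
      set NN := p * Real.cosh (Real.pi * y) + y * Real.sinh (Real.pi * y)
      have hDc : (D : ℂ) ≠ 0 := ofReal_ne_zero.2 hDpos.ne'
      have hyc : (y : ℂ) ≠ 0 := ofReal_ne_zero.2 hy.ne'
      push_cast
      rw [sub_zero]
      have e1 : (Real.pi : ℂ) * NN / (D * I) = -(Real.pi * NN / D) * I := by
        rw [div_mul_eq_div_div, div_I]; ring
      have e2 : (koshW p 0 : ℂ) / (y * I) = -(koshW p 0 / y) * I := by
        rw [div_mul_eq_div_div, div_I]; ring
      rw [e1, e2]
      field_simp
      ring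
    have hlim2 : Tendsto (fun N => (-2 * (A - ∑ i ∈ Finset.range N,
        koshW p (lam (i + 1)) * (y / (y ^ 2 + lam (i + 1) ^ 2)))) ) atTop (𝓝 0) := by
      have := (continuous_im.tendsto _).comp hlim
      simp only [zero_im] at this
      refine this.congr (fun N => ?_)
      simp only [Function.comp, hR, mul_im, ofReal_re, ofReal_im, I_re, I_im, mul_one, add_zero,
        mul_zero]
    have h3 := (hlim2.const_mul (1 / 2)).const_add A
    simp only [mul_zero, add_zero] at h3
    refine h3.congr (fun N => ?_)
    ring
  · intro n
    have := koshW_nonneg hp (lam (n + 1))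
    positivity

/-! ### The Gamma integral along a complex ray -/

lemma one_add_mul_I_mem_slitPlane (v : ℝ) : (1 + v * I : ℂ) ∈ slitPlane := by
  left; simp

lemma hasDerivAt_one_add_mul_I_cpow (a : ℂ) (v : ℝ) :
    HasDerivAt (fun v : ℝ => (1 + v * I : ℂ) ^ a) (a * (1 + v * I) ^ (a - 1) * I) v := by
  have h1 : HasDerivAt (fun z : ℂ => (1 + z * I : ℂ)) (1 * I) (v : ℂ) :=
    ((hasDerivAt_id (v : ℂ)).mul_const I).const_add 1
  exact ((h1.cpow_const (c := a) (one_add_mul_I_mem_slitPlane v)).comp_ofReal).congr_deriv (by ring)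

lemma integrableOn_cpow_exp {a : ℂ} (ha : 0 < a.re) {r : ℝ} (hr : 0 < r) :
    IntegrableOn (fun y : ℝ => (y : ℂ) ^ (a - 1) * (Real.exp (-(r * y)) : ℂ)) (Ioi 0) := by
  have hbase : IntegrableOn (fun y : ℝ => y ^ (a.re - 1) * Real.exp (-r * y)) (Ioi 0) := by
    have := integrableOn_rpow_mul_exp_neg_mul_rpow (p := 1) (s := a.re - 1) (b := r)
      (by linarith) one_pos hr
    simpa using this
  refine hbase.mono' ?_ ?_
  · apply ContinuousOn.aestronglyMeasurable _ measurableSet_Ioi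
    intro y hy
    apply ContinuousAt.continuousWithinAt
    apply ContinuousAt.mul
    · exact (continuousAt_ofReal_cpow_const _ _ (Or.inr (ne_of_gt hy)))
    · fun_prop
  · filter_upwards [ae_restrict_mem measurableSet_Ioi] with y hy
    rw [norm_mul, norm_cpow_eq_rpow_re_of_pos hy, norm_real, Real.norm_of_nonneg (Real.exp_pos _).le]
    simp

lemma norm_exp_neg_one_add_mul_I (v y : ℝ) :
    ‖Complex.exp (-((1 + v * I) * y))‖ = Real.exp (-(1 * y)) := by
  rw [norm_exp]; congr 1; simp

lemma integrableOn_cpow_cexp {a : ℂ} (ha : 0 < a.re) (v : ℝ) :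
    IntegrableOn (fun y : ℝ => (y : ℂ) ^ (a - 1) * Complex.exp (-((1 + v * I) * y))) (Ioi 0) := by
  refine (integrableOn_cpow_exp ha one_pos).norm.mono' ?_ ?_
  · apply ContinuousOn.aestronglyMeasurable _ measurableSet_Ioi
    intro y hy
    apply ContinuousAt.continuousWithinAt
    apply ContinuousAt.mul
    · exact (continuousAt_ofReal_cpow_const _ _ (Or.inr (ne_of_gt hy)))
    · fun_prop
  · filter_upwards with y
    rw [norm_mul, norm_mul, norm_exp_neg_one_add_mul_I, norm_real,
      Real.norm_of_nonneg (Real.exp_pos _).le]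

/-- Integration by parts in the complex Gamma integral. -/
lemma gamma_ibp {a : ℂ} (ha : 0 < a.re) (v : ℝ) :
    (1 + v * I) * ∫ y in Ioi (0 : ℝ), (y : ℂ) ^ a * Complex.exp (-((1 + v * I) * y)) =
      a * ∫ y in Ioi (0 : ℝ), (y : ℂ) ^ (a - 1) * Complex.exp (-((1 + v * I) * y)) := by
  have i1 := integrableOn_cpow_cexp ha v
  have i2 : IntegrableOn (fun y : ℝ => (y : ℂ) ^ a * Complex.exp (-((1 + v * I) * y))) (Ioi 0) := by
    simpa using integrableOn_cpow_cexp (a := a + 1) (by simp; linarith) v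
  have hd : ∀ y ∈ Ioi (0 : ℝ), HasDerivAt (fun y : ℝ => (y : ℂ) ^ a *
      Complex.exp (-((1 + v * I) * y))) (a * ((y : ℂ) ^ (a - 1) * Complex.exp (-((1 + v * I) * y)))
      - (1 + v * I) * ((y : ℂ) ^ a * Complex.exp (-((1 + v * I) * y)))) y := by
    intro y hy
    have h1 : HasDerivAt (fun y : ℝ => (y : ℂ) ^ a) (a * (y : ℂ) ^ (a - 1)) y := by
      exact (((hasDerivAt_id (y : ℂ)).cpow_const (c := a)
        (Or.inl (by simpa using hy))).comp_ofReal).congr_deriv (by simp)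
    have h2 : HasDerivAt (fun y : ℝ => Complex.exp (-((1 + v * I) * y)))
        (Complex.exp (-((1 + v * I) * y)) * (-((1 + v * I)))) y := by
      exact (((((hasDerivAt_id (y : ℂ)).const_mul (1 + v * I)).fun_neg).cexp).comp_ofReal).congr_deriv
        (by simp)
    exact (h1.mul h2).congr_deriv (by ring)
  have hcont : ContinuousWithinAt (fun y : ℝ => (y : ℂ) ^ a *
      Complex.exp (-((1 + v * I) * y))) (Ici 0) 0 := by
    apply ContinuousAt.continuousWithinAt
    apply ContinuousAt.mul
    · exact (continuous_ofReal_cpow_const ha).continuousAt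
    · fun_prop
  have hlim : Tendsto (fun y : ℝ => (y : ℂ) ^ a * Complex.exp (-((1 + v * I) * y))) atTop (𝓝 0) := by
    rw [tendsto_zero_iff_norm_tendsto_zero]
    have := tendsto_rpow_mul_exp_neg_mul_atTop_nhds_zero a.re 1 one_pos
    refine this.congr' ?_
    filter_upwards [eventually_gt_atTop 0] with y hy
    rw [norm_mul, norm_exp_neg_one_add_mul_I, norm_cpow_eq_rpow_re_of_pos hy]
    simp
  have := integral_Ioi_of_hasDerivAt_of_tendsto hcont hd
    ((i1.const_mul a).sub (i2.const_mul (1 + v * I))) hlim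
  rw [integral_sub (i1.const_mul a) (i2.const_mul (1 + v * I)), integral_const_mul,
    integral_const_mul] at this
  have ha0 : a ≠ 0 := by rintro rfl; simp at ha
  simp [ha0] at this
  exact (sub_eq_zero.1 this).symm

lemma hasDerivAt_gamma_integral {a : ℂ} (ha : 0 < a.re) (v : ℝ) :
    HasDerivAt (fun v : ℝ => ∫ y in Ioi (0 : ℝ), (y : ℂ) ^ (a - 1) * Complex.exp (-((1 + v * I) * y)))
      (-I * ∫ y in Ioi (0 : ℝ), (y : ℂ) ^ a * Complex.exp (-((1 + v * I) * y))) v := by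
  have i2 : IntegrableOn (fun y : ℝ => (y : ℂ) ^ a * (Real.exp (-(1 * y)) : ℂ)) (Ioi 0) := by
    have := integrableOn_cpow_exp (a := a + 1) (by simp; linarith) one_pos
    simpa only [add_sub_cancel_right] using this
  have i3 : IntegrableOn (fun y : ℝ => (y : ℂ) ^ a * Complex.exp (-((1 + v * I) * y))) (Ioi 0) := by
    simpa using integrableOn_cpow_cexp (a := a + 1) (by simp; linarith) v
  have := hasDerivAt_integral_of_dominated_loc_of_deriv_le (μ := volume.restrict (Ioi (0 : ℝ)))
    (F := fun (v : ℝ) (y : ℝ) => (y : ℂ) ^ (a - 1) * Complex.exp (-((1 + v * I) * y)))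
    (F' := fun (v : ℝ) (y : ℝ) => -I * ((y : ℂ) ^ a * Complex.exp (-((1 + v * I) * y))))
    (x₀ := v) (s := univ) (bound := fun y => ‖(y : ℂ) ^ a * (Real.exp (-(1 * y)) : ℂ)‖)
    univ_mem (Eventually.of_forall fun v => (integrableOn_cpow_cexp ha v).aestronglyMeasurable)
    (integrableOn_cpow_cexp ha v) (i3.const_mul (-I)).aestronglyMeasurable
    (Eventually.of_forall fun y v _ => by
      rw [norm_mul, norm_mul, norm_mul, norm_exp_neg_one_add_mul_I, norm_real,
        Real.norm_of_nonneg (Real.exp_pos _).le]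
      simp) i2.norm ?_
  · rw [← integral_const_mul]
    exact this.2
  · filter_upwards [ae_restrict_mem measurableSet_Ioi] with y hy v _
    have hy' : (y : ℂ) ≠ 0 := ofReal_ne_zero.2 (ne_of_gt hy)
    have h1 : HasDerivAt (fun v : ℝ => -((1 + v * I : ℂ) * y)) (-(I * y)) v := by
      exact (((((hasDerivAt_id (v : ℂ)).mul_const I).const_add 1).mul_const
        (y : ℂ)).fun_neg.comp_ofReal).congr_deriv (by simp)
    refine ((h1.cexp).const_mul ((y : ℂ) ^ (a - 1))).congr_deriv ?_
    have : (y : ℂ) ^ a = (y : ℂ) ^ (a - 1) * y := by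
      nth_rewrite 3 [← cpow_one (y : ℂ)]
      rw [← cpow_add _ _ hy', sub_add_cancel]
    rw [this]; ring

/-- The Gamma integral along the ray through `1 + iv`: both sides satisfy the same first-order
linear differential equation in `v` and agree at `v = 0`. -/
lemma gamma_integral_complex {a : ℂ} (ha : 0 < a.re) (v : ℝ) :
    ∫ y in Ioi (0 : ℝ), (y : ℂ) ^ (a - 1) * Complex.exp (-((1 + v * I) * y)) =
      (1 + v * I) ^ (-a) * Complex.Gamma a := by
  set G : ℝ → ℂ := fun v => ∫ y in Ioi (0 : ℝ), (y : ℂ) ^ (a - 1) * Complex.exp (-((1 + v * I) * y))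
    with hG
  have hne : ∀ v : ℝ, (1 + v * I : ℂ) ≠ 0 := fun v => slitPlane_ne_zero (one_add_mul_I_mem_slitPlane v)
  have hd : ∀ v : ℝ, HasDerivAt (fun v : ℝ => (1 + v * I : ℂ) ^ a * G v) 0 v := by
    intro v
    refine ((hasDerivAt_one_add_mul_I_cpow a v).mul (hasDerivAt_gamma_integral ha v)).congr_deriv ?_
    have h1 := gamma_ibp ha v
    have h2 : (1 + v * I : ℂ) ^ a = (1 + v * I) ^ (a - 1) * (1 + v * I) := by
      nth_rewrite 3 [← cpow_one (1 + v * I : ℂ)]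
      rw [← cpow_add _ _ (hne v), sub_add_cancel]
    rw [h2]
    linear_combination -I * (1 + v * I) ^ (a - 1) * h1
  have hconst := is_const_of_deriv_eq_zero (fun v => (hd v).differentiableAt) (fun v => (hd v).deriv) v 0
  have h0 : G 0 = Complex.Gamma a := by
    have := Complex.integral_cpow_mul_exp_neg_mul_Ioi ha one_pos
    simp only [hG]
    simpa using this
  have hc : (1 + v * I : ℂ) ^ a ≠ 0 := by simp [cpow_eq_zero_iff, hne v]
  simp only [h0, ofReal_zero, zero_mul, add_zero, one_cpow, one_mul] at hconst
  rw [cpow_neg, eq_comm, inv_mul_eq_iff_eq_mul₀ hc]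
  exact hconst.symm

/-! ### The Laplace transform of the Bessel kernel -/

/-- The weight `(1 - u²)^(s-1)` of Poisson's integral. -/
noncomputable def poissonW (s : ℂ) (u : ℝ) : ℂ := ((1 - u ^ 2 : ℝ) : ℂ) ^ (s - 1)

lemma continuous_poissonW {s : ℂ} (hs : 1 < s.re) : Continuous (poissonW s) := by
  have h := continuous_ofReal_cpow_const (y := s - 1) (by simpa using hs)
  exact h.comp (by fun_prop : Continuous fun u : ℝ => 1 - u ^ 2)

lemma norm_poissonW_le {s : ℂ} (hs : 1 < s.re) {u : ℝ} (hu : |u| ≤ 1) : ‖poissonW s u‖ ≤ 1 := by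
  have h1 : u ^ 2 ≤ 1 := by rw [← sq_abs]; nlinarith [abs_nonneg u]
  rw [poissonW, norm_cpow_eq_rpow_re_of_nonneg (by linarith) (by simp; linarith)]
  exact Real.rpow_le_one (by linarith) (by nlinarith) (by simp; linarith)

lemma integral_poissonW {s : ℂ} (hs : 1 < s.re) :
    Gamma (2 * s) * ∫ u in (-1 : ℝ)..1, poissonW s u = 2 * (4 : ℂ) ^ (s - 1) * Gamma s ^ 2 := by
  have hB := Gamma_mul_Gamma_eq_betaIntegral (s := s) (t := s) (by linarith) (by linarith)
  have h1 := intervalIntegral.integral_comp_div_add (a := -1) (b := 1)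
    (fun x : ℝ => (x : ℂ) ^ (s - 1) * (1 - (x : ℂ)) ^ (s - 1)) (two_ne_zero) (1 / 2)
  have h2 : ∫ u in (-1 : ℝ)..1, ((u / 2 + 1 / 2 : ℝ) : ℂ) ^ (s - 1) *
      (1 - ((u / 2 + 1 / 2 : ℝ) : ℂ)) ^ (s - 1) =
      ∫ u in (-1 : ℝ)..1, ((4 : ℂ) ^ (s - 1))⁻¹ * poissonW s u := by
    refine intervalIntegral.integral_congr (fun u hu => ?_)
    rw [uIcc_of_le (by norm_num)] at hu
    have e1 : (1 - ((u / 2 + 1 / 2 : ℝ) : ℂ)) = ((1 / 2 - u / 2 : ℝ) : ℂ) := by push_cast; ring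
    rw [e1, ← mul_cpow_ofReal_nonneg (by linarith [hu.1]) (by linarith [hu.2]), poissonW,
      ← ofReal_mul, inv_mul_eq_div, eq_div_iff (by simp [cpow_eq_zero_iff]),
      show (4 : ℂ) = ((4 : ℝ) : ℂ) by norm_num,
      ← mul_cpow_ofReal_nonneg (by nlinarith [hu.1, hu.2]) (by norm_num), ← ofReal_mul]
    congr 2
    ring
  have h4 : (4 : ℂ) ^ (s - 1) ≠ 0 := by simp [cpow_eq_zero_iff]
  rw [h2, intervalIntegral.integral_const_mul] at h1
  norm_num at h1
  change _ = 2 * betaIntegral s s at h1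
  rw [inv_mul_eq_div, div_eq_iff h4] at h1
  rw [h1, two_mul s, pow_two, hB]
  ring

lemma hasDerivAt_intervalIntegral_of_continuous {F F' : ℝ → ℝ → ℂ} {a b : ℝ}
    (hF : ∀ x, Continuous (F x)) (hF' : Continuous (Function.uncurry F'))
    (hd : ∀ t ∈ uIoc a b, ∀ x, HasDerivAt (fun x => F x t) (F' x t) x) (x : ℝ) :
    HasDerivAt (fun x => ∫ t in a..b, F x t) (∫ t in a..b, F' x t) x := by
  obtain ⟨C, hC⟩ := ((isCompact_closedBall x 1).prod (isCompact_uIcc (a := a) (b := b))).exists_bound_of_continuousOn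
    hF'.continuousOn
  refine (intervalIntegral.hasDerivAt_integral_of_dominated_loc_of_deriv_le (μ := volume)
    (s := Metric.closedBall x 1) (bound := fun _ => C)
    (Metric.closedBall_mem_nhds x one_pos) (Eventually.of_forall fun y => ?_) ?_ ?_ ?_ ?_ ?_).2
  · exact (hF y).aestronglyMeasurable
  · exact (hF x).intervalIntegrable _ _
  · exact (hF'.comp (by fun_prop : Continuous fun t : ℝ => (x, t))).aestronglyMeasurable
  · exact Eventually.of_forall fun t ht y hy => hC (y, t) ⟨hy, uIoc_subset_uIcc ht⟩
  · exact intervalIntegrable_const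
  · exact Eventually.of_forall fun t ht y _ => hd t ht y

/-- `∫ (1-u²)^(s-1) (1+iεu)^(-2s) du` over `[-1,1]`, via a differential equation in `ε`. -/
lemma integral_poissonW_mul {s : ℂ} (hs : 1 < s.re) (e : ℝ) :
    ((1 + e ^ 2 : ℝ) : ℂ) ^ s * ∫ u in (-1 : ℝ)..1, poissonW s u * (1 + (e * u : ℝ) * I) ^ (-(2 * s)) =
      ∫ u in (-1 : ℝ)..1, poissonW s u := by
  have hW := continuous_poissonW hs
  have hpos : ∀ e : ℝ, ((1 + e ^ 2 : ℝ) : ℂ) ∈ slitPlane := fun e => by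
    rw [ofReal_mem_slitPlane]; positivity
  have hcP : ∀ a : ℂ, Continuous (fun q : ℝ × ℝ => (1 + (q.1 * q.2 : ℝ) * I : ℂ) ^ a) := fun a =>
    Continuous.cpow (by fun_prop) continuous_const (fun q => one_add_mul_I_mem_slitPlane _)
  have hcE : ∀ a : ℂ, Continuous (fun e : ℝ => ((1 + e ^ 2 : ℝ) : ℂ) ^ a) := fun a =>
    Continuous.cpow (by fun_prop) continuous_const (fun q => hpos _)
  have hdE : ∀ (a : ℂ) (e : ℝ), HasDerivAt (fun e : ℝ => ((1 + e ^ 2 : ℝ) : ℂ) ^ a)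
      (a * ((1 + e ^ 2 : ℝ) : ℂ) ^ (a - 1) * (2 * e)) e := by
    intro a e
    have h1 : HasDerivAt (fun z : ℂ => 1 + z ^ 2) (2 * (e : ℂ)) (e : ℂ) := by
      exact (((hasDerivAt_id (e : ℂ)).fun_pow 2).const_add 1).congr_deriv (by simp)
    have h2 := (h1.cpow_const (c := a) (by have := hpos e; push_cast at this; exact this)).comp_ofReal
    push_cast
    exact h2
  have hdP : ∀ (a : ℂ) (c e : ℝ), HasDerivAt (fun e : ℝ => (1 + (e * c : ℝ) * I : ℂ) ^ a)
      (a * (1 + (e * c : ℝ) * I) ^ (a - 1) * (I * c)) e := by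
    intro a c e
    have h0 : HasDerivAt (fun e : ℝ => e * c) c e := by simpa using (hasDerivAt_id e).mul_const c
    have h1 := (hasDerivAt_one_add_mul_I_cpow a (e * c)).scomp e h0
    refine h1.congr_deriv ?_
    rw [real_smul]; ring
  have key : ∀ e : ℝ, HasDerivAt (fun e : ℝ => ∫ u in (-1 : ℝ)..1, poissonW s u *
      ((1 + e ^ 2 : ℝ) : ℂ) ^ s * (1 + (e * u : ℝ) * I) ^ (-(2 * s))) 0 e := by
    intro e
    have h := hasDerivAt_intervalIntegral_of_continuous (a := -1) (b := 1)
      (F := fun e u => poissonW s u * ((1 + e ^ 2 : ℝ) : ℂ) ^ s * (1 + (e * u : ℝ) * I) ^ (-(2 * s)))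
      (F' := fun e u => poissonW s u * (s * ((1 + e ^ 2 : ℝ) : ℂ) ^ (s - 1) * (2 * e)) *
        (1 + (e * u : ℝ) * I) ^ (-(2 * s)) + poissonW s u * ((1 + e ^ 2 : ℝ) : ℂ) ^ s *
        (-(2 * s) * (1 + (e * u : ℝ) * I) ^ (-(2 * s) - 1) * (I * u))) ?_ ?_ ?_ e
    · refine h.congr_deriv ?_
      have hsb : (0 : ℝ) < s.re := by linarith
      have hFTC := intervalIntegral.integral_eq_sub_of_hasDerivAt_of_le (a := -1) (b := 1)
        (f := fun u : ℝ => I * ((1 + e ^ 2 : ℝ) : ℂ) ^ (s - 1) * (((1 - u ^ 2 : ℝ) : ℂ) ^ s *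
          (1 + (u * e : ℝ) * I) ^ (-(2 * s))))
        (f' := fun u : ℝ => poissonW s u * (s * ((1 + e ^ 2 : ℝ) : ℂ) ^ (s - 1) * (2 * e)) *
        (1 + (e * u : ℝ) * I) ^ (-(2 * s)) + poissonW s u * ((1 + e ^ 2 : ℝ) : ℂ) ^ s *
        (-(2 * s) * (1 + (e * u : ℝ) * I) ^ (-(2 * s) - 1) * (I * u))) (by norm_num) ?_ ?_ ?_
      · rw [hFTC]
        have hs0 : s ≠ 0 := by rintro rfl; simp at hsb
        simp [hs0]
      · apply Continuous.continuousOn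
        refine continuous_const.mul (Continuous.mul ?_ ?_)
        · exact (continuous_ofReal_cpow_const hsb).comp (by fun_prop : Continuous fun u : ℝ => 1 - u ^ 2)
        · exact (hcP _).comp (by fun_prop : Continuous fun u : ℝ => (u, e))
      · intro u hu
        have hu2 : 0 < 1 - u ^ 2 := by nlinarith [hu.1, hu.2]
        have d1 : HasDerivAt (fun u : ℝ => ((1 - u ^ 2 : ℝ) : ℂ) ^ s)
            (s * poissonW s u * (-(2 * u))) u := by
          have h1 : HasDerivAt (fun z : ℂ => 1 - z ^ 2) (-(2 * (u : ℂ))) (u : ℂ) := by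
            exact (((hasDerivAt_id (u : ℂ)).fun_pow 2).const_sub 1).congr_deriv (by simp)
          have h2 := (h1.cpow_const (c := s) (by
            have := ofReal_mem_slitPlane.2 hu2; push_cast at this; exact this)).comp_ofReal
          simp only [poissonW]
          push_cast
          exact h2
        refine ((d1.mul (hdP (-(2 * s)) e u)).const_mul
          (I * ((1 + e ^ 2 : ℝ) : ℂ) ^ (s - 1))).congr_deriv ?_
        have e1 : ((1 - u ^ 2 : ℝ) : ℂ) ^ s = poissonW s u * (1 - (u : ℂ) ^ 2) := by
          have hne : ((1 - u ^ 2 : ℝ) : ℂ) ≠ 0 := ofReal_ne_zero.2 hu2.ne'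
          rw [poissonW, cpow_sub _ _ hne, cpow_one]
          push_cast at hne ⊢
          field_simp
        have e2 : ((1 + e ^ 2 : ℝ) : ℂ) ^ s = ((1 + e ^ 2 : ℝ) : ℂ) ^ (s - 1) * (1 + (e : ℂ) ^ 2) := by
          have hne := slitPlane_ne_zero (hpos e)
          rw [cpow_sub _ _ hne, cpow_one]
          push_cast at hne ⊢
          field_simp
        have e3 : (1 + (e * u : ℝ) * I : ℂ) ^ (-(2 * s)) =
            (1 + (e * u : ℝ) * I) ^ (-(2 * s) - 1) * (1 + (e * u) * I) := by
          have hne := slitPlane_ne_zero (one_add_mul_I_mem_slitPlane (e * u))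
          rw [cpow_sub _ _ hne, cpow_one]
          push_cast at hne ⊢
          field_simp
        rw [mul_comm u e, e1, e2, e3]
        generalize ((1 + e ^ 2 : ℝ) : ℂ) ^ (s - 1) = E1
        generalize (1 + (e * u : ℝ) * I) ^ (-(2 * s) - 1) = P
        linear_combination (-2 * s * e * P * E1 * poissonW s u) * I_sq
      · apply Continuous.intervalIntegrable
        have := (hcP (-(2 * s))).comp (by fun_prop : Continuous fun u : ℝ => (e, u))
        have := (hcP (-(2 * s) - 1)).comp (by fun_prop : Continuous fun u : ℝ => (e, u))
        fun_prop
    · intro e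
      have := (hcP (-(2 * s))).comp (by fun_prop : Continuous fun u : ℝ => (e, u))
      fun_prop
    · have h1 := hcP (-(2 * s))
      have h2 := hcP (-(2 * s) - 1)
      have h3 := (hcE s).comp (by fun_prop : Continuous fun q : ℝ × ℝ => q.1)
      have h4 := (hcE (s - 1)).comp (by fun_prop : Continuous fun q : ℝ × ℝ => q.1)
      simp only [Function.uncurry_def]
      fun_prop
    · intro u _ e
      exact ((((hdE s e).const_mul (poissonW s u)).mul (hdP (-(2 * s)) u e))).congr_deriv (by ring)
  have hconst := is_const_of_deriv_eq_zero (fun v => (key v).differentiableAt)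
    (fun v => (key v).deriv) e 0
  simp only [ne_eq, OfNat.ofNat_ne_zero, not_false_eq_true, zero_pow, add_zero, ofReal_one, one_cpow,
    mul_one, zero_mul, ofReal_zero] at hconst
  rw [← hconst, ← intervalIntegral.integral_const_mul]
  congr 1; ext u; ring

/-- Fourier transform of the Poisson weight over `[-1,1]`. -/
noncomputable def poissonF (s : ℂ) (v : ℝ) : ℂ :=
  ∫ u in (-1 : ℝ)..1, poissonW s u * cexp (-((v * u : ℝ) * I))

lemma norm_cexp_neg_ofReal_mul_I (v : ℝ) : ‖cexp (-((v : ℂ) * I))‖ = 1 := by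
  rw [norm_exp]; simp

lemma continuous_poissonF {s : ℂ} (hs : 1 < s.re) : Continuous (poissonF s) := by
  have := continuous_poissonW hs
  apply intervalIntegral.continuous_parametric_intervalIntegral_of_continuous'
  simp only [Function.uncurry_def]
  fun_prop

lemma norm_poissonF_le {s : ℂ} (hs : 1 < s.re) (v : ℝ) : ‖poissonF s v‖ ≤ 2 := by
  have h := intervalIntegral.norm_integral_le_of_norm_le_const (a := -1) (b := 1) (C := 1)
    (f := fun u : ℝ => poissonW s u * cexp (-((v * u : ℝ) * I))) ?_
  · refine h.trans ?_; norm_num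
  · intro u hu
    rw [uIoc_of_le (by norm_num)] at hu
    rw [norm_mul, norm_cexp_neg_ofReal_mul_I, mul_one]
    exact norm_poissonW_le hs (abs_le.2 ⟨hu.1.le, hu.2⟩)

lemma integral_poissonW_cos {s : ℂ} (hs : 1 < s.re) (v : ℝ) :
    2 * ∫ u in (0 : ℝ)..1, poissonW s u * (Real.cos (v * u) : ℂ) = poissonF s v := by
  have hW := continuous_poissonW hs
  have hc : Continuous fun u : ℝ => poissonW s u * cexp (-((v * u : ℝ) * I)) := by fun_prop
  have hc' : Continuous fun u : ℝ => poissonW s u * cexp (((v * u : ℝ) * I)) := by fun_prop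
  rw [poissonF, ← intervalIntegral.integral_add_adjacent_intervals (b := 0)
    (hc.intervalIntegrable _ _) (hc.intervalIntegrable _ _)]
  have h1 := intervalIntegral.integral_comp_neg (a := 0) (b := 1)
    (fun u : ℝ => poissonW s u * cexp (-((v * u : ℝ) * I)))
  rw [neg_zero] at h1
  have h2 : ∫ u in (0 : ℝ)..1, poissonW s (-u) * cexp (-((v * (-u) : ℝ) * I)) =
      ∫ u in (0 : ℝ)..1, poissonW s u * cexp (((v * u : ℝ) * I)) := by
    congr 1; ext u
    simp [poissonW]
  rw [← h1, h2, ← intervalIntegral.integral_add (hc'.intervalIntegrable _ _)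
    (hc.intervalIntegrable _ _), ← intervalIntegral.integral_const_mul]
  congr 1; ext u
  rw [ofReal_cos, Complex.cos]
  ring_nf

/-- The kernel `y^ν J_ν(X y)` with `ν = s - 1/2`. -/
noncomputable def besj (s : ℂ) (X y : ℝ) : ℂ := (y : ℂ) ^ (s - 1 / 2) * besselJ (s - 1 / 2) (X * y)

/-- The normalising constant in `besj s X y = besjC s X * y^(2s-1) * poissonF s (X y)`. -/
noncomputable def besjC (s : ℂ) (X : ℝ) : ℂ :=
  ((X / 2 : ℝ) : ℂ) ^ (s - 1 / 2) / ((Real.sqrt Real.pi : ℂ) * Gamma s)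

lemma besj_eq {s : ℂ} (hs : 1 < s.re) {X y : ℝ} (hX : 0 < X) (hy : 0 < y) :
    besj s X y = besjC s X * (y : ℂ) ^ (2 * s - 1) * poissonF s (X * y) := by
  have hy' : (y : ℂ) ≠ 0 := ofReal_ne_zero.2 hy.ne'
  rw [besj, besselJ, besjC, ← integral_poissonW_cos hs]
  simp only [poissonW]
  rw [show s - 1 / 2 + 1 / 2 = s by ring, show s - 1 / 2 - 1 / 2 = s - 1 by ring,
    show X * y / 2 = X / 2 * y by ring, ofReal_mul, mul_cpow_ofReal_nonneg (by positivity) hy.le,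
    show 2 * s - 1 = (s - 1 / 2) + (s - 1 / 2) by ring, cpow_add _ _ hy']
  ring

lemma norm_besj_le {s : ℂ} (hs : 1 < s.re) {X y : ℝ} (hX : 0 < X) (hy : 0 < y) :
    ‖besj s X y‖ ≤ 2 * ‖besjC s X‖ * y ^ (2 * s.re - 1) := by
  rw [besj_eq hs hX hy, norm_mul, norm_mul, norm_cpow_eq_rpow_re_of_pos hy]
  have := norm_poissonF_le hs (X * y)
  have h2 : (2 * s - 1).re = 2 * s.re - 1 := by simp
  rw [h2]
  have h0 : 0 ≤ ‖besjC s X‖ * y ^ (2 * s.re - 1) := by positivity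
  nlinarith

lemma continuousOn_besj {s : ℂ} (hs : 1 < s.re) {X : ℝ} (hX : 0 < X) :
    ContinuousOn (besj s X) (Ioi 0) := by
  have h : ContinuousOn (fun y : ℝ => besjC s X * (y : ℂ) ^ (2 * s - 1) * poissonF s (X * y)) (Ioi 0) := by
    have h1 := continuous_ofReal_cpow_const (y := 2 * s - 1) (by simp; linarith)
    have h2 := (continuous_poissonF hs).comp (by fun_prop : Continuous fun y : ℝ => X * y)
    exact ((continuous_const.mul h1).mul h2).continuousOn
  exact h.congr fun y hy => besj_eq hs hX hy

/-- The Laplace transform of `integral_exp_besj` after scaling, with `e` the ratio of the Bessel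
argument to the Laplace variable. -/
lemma integral_cpow_exp_poissonF {s : ℂ} (hs : 1 < s.re) (e : ℝ) :
    ((1 + e ^ 2 : ℝ) : ℂ) ^ s *
      ∫ y in Ioi (0 : ℝ), (y : ℂ) ^ (2 * s - 1) * (Real.exp (-(1 * y)) : ℂ) * poissonF s (e * y) =
      2 * (4 : ℂ) ^ (s - 1) * Gamma s ^ 2 := by
  have hW := continuous_poissonW hs
  have ha : 0 < (2 * s).re := by simp; linarith
  have i1 := integrableOn_cpow_exp ha one_pos
  have i2 : IntegrableOn (poissonW s) (Ioc (-1) 1) := hW.integrableOn_Ioc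
  have h1 : ∫ y in Ioi (0 : ℝ), (y : ℂ) ^ (2 * s - 1) * (Real.exp (-(1 * y)) : ℂ) * poissonF s (e * y) =
      ∫ y in Ioi (0 : ℝ), ∫ u in Ioc (-1 : ℝ) 1, ((y : ℂ) ^ (2 * s - 1) * (Real.exp (-(1 * y)) : ℂ)) *
        poissonW s u * cexp (-((e * y * u : ℝ) * I)) := by
    congr 1; ext y
    rw [poissonF, intervalIntegral.integral_of_le (by norm_num), ← integral_const_mul]
    congr 1; ext u; ring
  have hint : Integrable (Function.uncurry fun (y u : ℝ) => ((y : ℂ) ^ (2 * s - 1) *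
      (Real.exp (-(1 * y)) : ℂ)) * poissonW s u * cexp (-((e * y * u : ℝ) * I)))
      ((volume.restrict (Ioi 0)).prod (volume.restrict (Ioc (-1 : ℝ) 1))) := by
    refine (i1.mul_prod i2).mul_bdd (c := 1) ?_ ?_
    · apply Continuous.aestronglyMeasurable; fun_prop
    · exact Eventually.of_forall fun q => (norm_cexp_neg_ofReal_mul_I _).le
  rw [h1, integral_integral_swap hint]
  have h2 : ∀ u : ℝ, ∫ y in Ioi (0 : ℝ), ((y : ℂ) ^ (2 * s - 1) * (Real.exp (-(1 * y)) : ℂ)) *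
        poissonW s u * cexp (-((e * y * u : ℝ) * I)) =
        Gamma (2 * s) * (poissonW s u * (1 + (e * u : ℝ) * I) ^ (-(2 * s))) := by
    intro u
    have h := gamma_integral_complex ha (e * u)
    rw [show Gamma (2 * s) * (poissonW s u * (1 + (e * u : ℝ) * I) ^ (-(2 * s))) =
      poissonW s u * ((1 + (e * u : ℝ) * I) ^ (-(2 * s)) * Gamma (2 * s)) by ring, ← h,
      ← integral_const_mul]
    congr 1; ext y
    rw [show (-((1 + ((e * u : ℝ) : ℂ) * I) * y)) = ((-(1 * y) : ℝ) : ℂ) + -(((e * y * u : ℝ) : ℂ) * I) by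
      push_cast; ring, Complex.exp_add, ofReal_exp]
    ring
  simp only [h2]
  rw [integral_const_mul, ← intervalIntegral.integral_of_le (by norm_num), ← integral_poissonW hs,
    ← integral_poissonW_mul hs e]
  ring

/-- `φ(t) = C (t² + X²)^(-s)`, the Laplace transform of `besj s X`. -/
noncomputable def lapPhi (s : ℂ) (X t : ℝ) : ℂ :=
  ((2 * X : ℝ) : ℂ) ^ (s - 1 / 2) * Gamma s / (Real.sqrt Real.pi : ℂ) * ((t ^ 2 + X ^ 2 : ℝ) : ℂ) ^ (-s)

lemma integrableOn_exp_besj {s : ℂ} (hs : 1 < s.re) {X t : ℝ} (hX : 0 < X) (ht : 0 < t) :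
    IntegrableOn (fun y : ℝ => (Real.exp (-(t * y)) : ℂ) * besj s X y) (Ioi 0) := by
  have h := (integrableOn_cpow_exp (a := 2 * s) (by simp; linarith) ht).norm.const_mul
    (2 * ‖besjC s X‖)
  refine h.mono' ?_ ?_
  · exact ((by fun_prop : Continuous fun y : ℝ => (Real.exp (-(t * y)) : ℂ)).continuousOn.mul
      (continuousOn_besj hs hX)).aestronglyMeasurable measurableSet_Ioi
  · filter_upwards [ae_restrict_mem measurableSet_Ioi] with y hy
    have := norm_besj_le hs hX hy
    rw [norm_mul, norm_mul, norm_cpow_eq_rpow_re_of_pos hy, show (2 * s - 1).re = 2 * s.re - 1 by simp]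
    calc _ ≤ ‖(Real.exp (-(t * y)) : ℂ)‖ * (2 * ‖besjC s X‖ * y ^ (2 * s.re - 1)) := by gcongr
      _ = _ := by ring

lemma two_mul_cpow_eq (s : ℂ) {X : ℝ} (hX : 0 < X) :
    ((2 * X : ℝ) : ℂ) ^ (s - 1 / 2) =
      ((X / 2 : ℝ) : ℂ) ^ (s - 1 / 2) * (2 * (4 : ℂ) ^ (s - 1)) := by
  have : (2 : ℂ) * 4 ^ (s - 1) = ((4 : ℝ) : ℂ) ^ (s - 1 / 2) := by
    rw [show s - 1 / 2 = (s - 1) + ((1 / 2 : ℝ) : ℂ) by push_cast; ring, cpow_add _ _ (by norm_num),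
      ← ofReal_cpow (by norm_num), ← Real.sqrt_eq_rpow, show (4 : ℝ) = 2 ^ 2 by norm_num,
      Real.sqrt_sq (by norm_num)]
    push_cast; norm_num [mul_comm]
  rw [this, ← mul_cpow_ofReal_nonneg (by positivity) (by norm_num), ← ofReal_mul]
  congr 2; ring

/-- The Laplace transform of `y^ν J_ν(X y)`. -/
lemma integral_exp_besj {s : ℂ} (hs : 1 < s.re) {X t : ℝ} (hX : 0 < X) (ht : 0 < t) :
    ∫ y in Ioi (0 : ℝ), (Real.exp (-(t * y)) : ℂ) * besj s X y = lapPhi s X t := by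
  have ht' : (t : ℂ) ≠ 0 := ofReal_ne_zero.2 ht.ne'
  have hG : Gamma s ≠ 0 := Gamma_ne_zero_of_re_pos (by linarith)
  have hpi : (Real.sqrt Real.pi : ℂ) ≠ 0 := ofReal_ne_zero.2 (by positivity)
  have h1 := integral_comp_mul_left_Ioi (fun y : ℝ => (y : ℂ) ^ (2 * s - 1) * (Real.exp (-(1 * y)) : ℂ) *
    poissonF s (X / t * y)) 0 ht
  have h2 : ∫ y in Ioi (0 : ℝ), (Real.exp (-(t * y)) : ℂ) * besj s X y =
      besjC s X * (t : ℂ) ^ (-(2 * s - 1)) * ∫ y in Ioi (0 : ℝ), ((t * y : ℝ) : ℂ) ^ (2 * s - 1) *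
        (Real.exp (-(1 * (t * y))) : ℂ) * poissonF s (X / t * (t * y)) := by
    rw [← integral_const_mul]
    refine setIntegral_congr_fun measurableSet_Ioi fun y hy => ?_
    have hy0 : 0 < y := hy
    rw [besj_eq hs hX hy, ofReal_mul, mul_cpow_ofReal_nonneg ht.le hy0.le, one_mul,
      show X / t * (t * y) = X * y by field_simp, cpow_neg]
    have : (t : ℂ) ^ (2 * s - 1) ≠ 0 := by simp [cpow_eq_zero_iff, ht']
    field_simp
  rw [h2, h1, mul_zero]
  have h3 := integral_cpow_exp_poissonF hs (X / t)
  have hp : 0 < 1 + (X / t) ^ 2 := by positivity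
  have hp' : ((1 + (X / t) ^ 2 : ℝ) : ℂ) ^ s ≠ 0 := by
    rw [Ne, cpow_eq_zero_iff]; simp only [not_and_or]; left; exact ofReal_ne_zero.2 hp.ne'
  rw [mul_comm, ← eq_div_iff hp'] at h3
  rw [h3, lapPhi, besjC, real_smul]
  have e1 : ((t ^ 2 + X ^ 2 : ℝ) : ℂ) ^ (-s) = (t : ℂ) ^ (-(2 * s - 1)) * (t : ℂ)⁻¹ *
      (((1 + (X / t) ^ 2 : ℝ) : ℂ) ^ s)⁻¹ := by
    rw [show t ^ 2 + X ^ 2 = (t * t) * (1 + (X / t) ^ 2) by field_simp, ofReal_mul,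
      mul_cpow_ofReal_nonneg (by positivity) hp.le, ofReal_mul, mul_cpow_ofReal_nonneg ht.le ht.le,
      cpow_neg _ s, cpow_neg _ s, cpow_neg, cpow_sub _ _ ht', two_mul, cpow_add _ _ ht', cpow_one]
    have : (t : ℂ) ^ s ≠ 0 := by simp [cpow_eq_zero_iff, ht']
    field_simp
  have e2 := two_mul_cpow_eq s hX
  rw [e1, e2, ofReal_inv]
  field_simp

/-! ### Basset's formula -/

lemma integrableOn_schlomilch {a b : ℝ} (ha : 0 < a) :
    IntegrableOn (fun q : ℝ => Real.exp (-(a * q - b / q) ^ 2)) (Ioi 0) := by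
  have h := ((integrable_exp_neg_mul_sq (b := a ^ 2) (by positivity)).integrableOn
    (s := Ioi 0)).const_mul (Real.exp (2 * a * b))
  refine h.mono' ?_ ?_
  · apply ContinuousOn.aestronglyMeasurable _ measurableSet_Ioi
    intro q hq
    have hq' : q ≠ 0 := ne_of_gt hq
    apply ContinuousAt.continuousWithinAt
    fun_prop (disch := assumption)
  · filter_upwards [ae_restrict_mem measurableSet_Ioi] with q hq
    have hq' : q ≠ 0 := ne_of_gt hq
    rw [Real.norm_of_nonneg (Real.exp_pos _).le, ← Real.exp_add, Real.exp_le_exp]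
    have : a * q * (b / q) = a * b := by field_simp
    nlinarith [sq_nonneg (b / q)]

/-- The Cauchy–Schlömilch integral. -/
lemma integral_schlomilch {a b : ℝ} (ha : 0 < a) (hb : 0 < b) :
    ∫ q in Ioi (0 : ℝ), Real.exp (-(a * q - b / q) ^ 2) = Real.sqrt Real.pi / (2 * a) := by
  set E : ℝ → ℝ := fun q => Real.exp (-(a * q - b / q) ^ 2) with hE
  have hdf : ∀ q ∈ Ioi (0 : ℝ), HasDerivWithinAt (fun q : ℝ => a * q - b / q) (a + b / q ^ 2) (Ioi 0) q := by
    intro q hq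
    have hq' : q ≠ 0 := ne_of_gt hq
    have h2 : HasDerivAt (fun q : ℝ => b / q) (-b / q ^ 2) q := by
      simpa [div_eq_mul_inv] using (hasDerivAt_inv hq').const_mul b
    have h1 : HasDerivAt (fun q : ℝ => a * q) a q := by simpa using (hasDerivAt_id q).const_mul a
    exact ((h1.sub h2).congr_deriv (by ring)).hasDerivWithinAt
  have hinj : InjOn (fun q : ℝ => a * q - b / q) (Ioi 0) := by
    apply StrictMonoOn.injOn
    intro q hq r hr hqr
    have hq0 : 0 < q := hq
    have : b / r < b / q := div_lt_div_of_pos_left hb hq hqr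
    have : a * q < a * r := by gcongr
    beta_reduce
    linarith
  have himg : (fun q : ℝ => a * q - b / q) '' Ioi 0 = univ := by
    rw [eq_univ_iff_forall]
    intro w
    set D := Real.sqrt (w ^ 2 + 4 * a * b) with hD
    have hD2 : D ^ 2 = w ^ 2 + 4 * a * b := Real.sq_sqrt (by positivity)
    have hDw : |w| < D := by
      rw [hD, ← Real.sqrt_sq_eq_abs]
      exact Real.sqrt_lt_sqrt (sq_nonneg _) (by nlinarith [mul_pos ha hb])
    have hpos : 0 < w + D := by linarith [neg_abs_le w]
    refine ⟨(w + D) / (2 * a), by simp only [mem_Ioi]; positivity, ?_⟩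
    beta_reduce
    field_simp
    nlinarith
  have h1 := integral_image_eq_integral_abs_deriv_smul measurableSet_Ioi hdf hinj
    (fun w : ℝ => Real.exp (-w ^ 2))
  have hg := integral_gaussian 1
  rw [himg, setIntegral_univ] at h1
  have hg' : ∫ w : ℝ, Real.exp (-w ^ 2) = Real.sqrt Real.pi := by simpa using hg
  have hdg : ∀ q ∈ Ioi (0 : ℝ), HasDerivWithinAt (fun q : ℝ => b / a / q) (-(b / a) / q ^ 2) (Ioi 0) q := by
    intro q hq
    have hq' : q ≠ 0 := ne_of_gt hq
    have : HasDerivAt (fun q : ℝ => b / a / q) (-(b / a) / q ^ 2) q := by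
      simpa [div_eq_mul_inv] using (hasDerivAt_inv hq').const_mul (b / a)
    exact this.hasDerivWithinAt
  have hinj2 : InjOn (fun q : ℝ => b / a / q) (Ioi 0) := by
    intro q hq r hr h
    have hq0 : q ≠ 0 := ne_of_gt hq
    have hr0 : r ≠ 0 := ne_of_gt hr
    beta_reduce at h
    field_simp at h
    exact h.symm
  have himg2 : (fun q : ℝ => b / a / q) '' Ioi 0 = Ioi 0 := by
    ext w
    constructor
    · rintro ⟨q, hq, rfl⟩
      have hq0 : 0 < q := hq
      simp only [mem_Ioi]; positivity
    · intro hw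
      have hw0 : 0 < w := hw
      refine ⟨b / a / w, by simp only [mem_Ioi]; positivity, ?_⟩
      beta_reduce
      field_simp
  have hcongr : ∀ q ∈ Ioi (0 : ℝ), |(-(b / a) / q ^ 2)| • (a * E (b / a / q)) = b / q ^ 2 * E q := by
    intro q hq
    have hq0 : 0 < q := hq
    rw [neg_div, abs_neg, abs_of_pos (by positivity), smul_eq_mul]
    simp only [hE]
    rw [show a * (b / a / q) - b / (b / a / q) = -(a * q - b / q) by field_simp; ring, neg_sq]
    field_simp
  have hEi : IntegrableOn E (Ioi 0) := integrableOn_schlomilch ha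
  have h2 := integral_image_eq_integral_abs_deriv_smul measurableSet_Ioi hdg hinj2 (fun q => a * E q)
  have h2i := integrableOn_image_iff_integrableOn_abs_deriv_smul measurableSet_Ioi hdg hinj2
    (fun q => a * E q)
  rw [himg2] at h2 h2i
  have hE2i : IntegrableOn (fun q => b / q ^ 2 * E q) (Ioi 0) :=
    (h2i.1 (hEi.const_mul a)).congr_fun hcongr measurableSet_Ioi
  rw [setIntegral_congr_fun measurableSet_Ioi hcongr] at h2
  have h3 : ∫ q in Ioi (0 : ℝ), |a + b / q ^ 2| • Real.exp (-(a * q - b / q) ^ 2) =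
      ∫ q in Ioi (0 : ℝ), (a * E q + b / q ^ 2 * E q) := by
    refine setIntegral_congr_fun measurableSet_Ioi fun q hq => ?_
    have hq0 : 0 < q := hq
    rw [abs_of_pos (by positivity), smul_eq_mul, add_mul]
  rw [h3, integral_add (hEi.const_mul a) hE2i, ← h2, integral_const_mul, hg'] at h1
  rw [eq_div_iff (by positivity)]
  linarith

/-- The one-sided stable subordination formula for `exp (-2ab)`. -/
lemma integral_subordination {a b : ℝ} (ha : 0 < a) (hb : 0 < b) :
    ∫ r in Ioi (0 : ℝ), r ^ (-3 / 2 : ℝ) * Real.exp (-(a ^ 2 * r + b ^ 2 / r)) =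
      Real.sqrt Real.pi / b * Real.exp (-(2 * a * b)) := by
  rw [← integral_comp_rpow_Ioi _ (show (-2 : ℝ) ≠ 0 by norm_num)]
  have : ∀ q ∈ Ioi (0 : ℝ), (|(-2 : ℝ)| * q ^ ((-2 : ℝ) - 1)) • ((q ^ (-2 : ℝ)) ^ (-3 / 2 : ℝ) *
      Real.exp (-(a ^ 2 * q ^ (-2 : ℝ) + b ^ 2 / q ^ (-2 : ℝ)))) =
      2 * Real.exp (-(2 * a * b)) * Real.exp (-(b * q - a / q) ^ 2) := by
    intro q hq
    have hq0 : 0 < q := hq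
    have e1 : q ^ ((-2 : ℝ) - 1) * (q ^ (-2 : ℝ)) ^ (-3 / 2 : ℝ) = 1 := by
      rw [← Real.rpow_mul hq0.le, ← Real.rpow_add hq0]; norm_num
    have e2 : q ^ (-2 : ℝ) = 1 / q ^ 2 := by
      rw [Real.rpow_neg hq0.le, one_div]; norm_cast
    rw [smul_eq_mul, abs_neg, abs_two]
    calc _ = 2 * (q ^ ((-2 : ℝ) - 1) * (q ^ (-2 : ℝ)) ^ (-3 / 2 : ℝ)) *
        Real.exp (-(a ^ 2 * q ^ (-2 : ℝ) + b ^ 2 / q ^ (-2 : ℝ))) := by ring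
      _ = _ := by
        rw [e1, mul_one, mul_assoc, ← Real.exp_add, e2]
        congr 2
        field_simp
        ring
  rw [setIntegral_congr_fun measurableSet_Ioi this, integral_const_mul, integral_schlomilch hb ha]
  field_simp

lemma integral_cos_mul_gaussian {r : ℝ} (hr : 0 < r) (l : ℝ) :
    ∫ t in Ioi (0 : ℝ), Real.cos (l * t) * Real.exp (-(r * t ^ 2)) =
      Real.sqrt (Real.pi / r) / 2 * Real.exp (-(l ^ 2 / (4 * r))) := by
  have h := fourierIntegral_gaussian (b := (r : ℂ)) (by simpa using hr) (l : ℂ)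
  have habs := integral_comp_abs (f := fun t : ℝ => Real.cos (l * t) * Real.exp (-(r * t ^ 2)))
  have hfun : ∀ x : ℝ, cexp (I * l * x) * cexp (-r * x ^ 2) =
      (Real.exp (-(r * x ^ 2)) : ℂ) * cexp ((l * x : ℝ) * I) := by
    intro x
    push_cast
    rw [mul_comm]
    ring_nf
  have hi : Integrable fun x : ℝ => cexp (I * l * x) * cexp (-r * x ^ 2) := by
    simp only [hfun]
    refine Integrable.mul_bdd (c := 1) ?_ ?_ ?_
    · have hgi : Integrable fun x : ℝ => Real.exp (-(r * x ^ 2)) := by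
        simpa [neg_mul] using integrable_exp_neg_mul_sq hr
      exact hgi.ofReal (𝕜 := ℂ)
    · apply Continuous.aestronglyMeasurable; fun_prop
    · exact Eventually.of_forall fun x => (norm_exp_ofReal_mul_I _).le
  have hre := reCLM.integral_comp_comm hi
  rw [h] at hre
  have e1 : ∀ x : ℝ, reCLM (cexp (I * l * x) * cexp (-r * x ^ 2)) =
      Real.cos (l * |x|) * Real.exp (-(r * |x| ^ 2)) := by
    intro x
    rw [hfun, reCLM_apply, re_ofReal_mul, exp_ofReal_mul_I_re, sq_abs, mul_comm]
    congr 1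
    rcases abs_choice x with h | h <;> rw [h]
    rw [mul_neg, Real.cos_neg]
  have e2 : reCLM (((Real.pi : ℂ) / r) ^ (1 / 2 : ℂ) * cexp (-(l : ℂ) ^ 2 / (4 * r))) =
      Real.sqrt (Real.pi / r) * Real.exp (-(l ^ 2 / (4 * r))) := by
    rw [show ((Real.pi : ℂ) / r) ^ (1 / 2 : ℂ) = ((Real.sqrt (Real.pi / r) : ℝ) : ℂ) by
      rw [Real.sqrt_eq_rpow, ofReal_cpow (by positivity)]; push_cast; rfl,
      show (-(l : ℂ) ^ 2 / (4 * r)) = ((-(l ^ 2 / (4 * r)) : ℝ) : ℂ) by push_cast; ring,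
      ← ofReal_exp, ← ofReal_mul, reCLM_apply, ofReal_re]
  rw [e2] at hre
  simp only [e1] at hre
  linarith

/-- The integral `∫ r^(s-3/2) exp (-X² r - l²/(4r)) dr`, to which both sides of Basset's formula
reduce. -/
noncomputable def bassetR (s : ℂ) (X l : ℝ) : ℂ :=
  ∫ r in Ioi (0 : ℝ), (r : ℂ) ^ (s - 3 / 2) * (Real.exp (-(X ^ 2 * r + l ^ 2 / (4 * r))) : ℂ)

/-- The left side of Basset's formula: write `Γ(s) (t² + X²)^(-s)` as a Gamma integral and take the
Fourier transform of the resulting Gaussians. -/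
lemma integral_cos_mul_cpow {s : ℂ} (hs : 1 < s.re) {X : ℝ} (hX : 0 < X) (l : ℝ) :
    Gamma s * ∫ t in Ioi (0 : ℝ), (Real.cos (l * t) : ℂ) * ((t ^ 2 + X ^ 2 : ℝ) : ℂ) ^ (-s) =
      (Real.sqrt Real.pi : ℂ) / 2 * bassetR s X l := by
  have hc : Continuous fun r : ℝ => (r : ℂ) ^ (s - 1) :=
    continuous_ofReal_cpow_const (y := s - 1) (by simpa using hs)
  have h1 : ∀ t : ℝ, Gamma s * ((Real.cos (l * t) : ℂ) * ((t ^ 2 + X ^ 2 : ℝ) : ℂ) ^ (-s)) =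
      ∫ r in Ioi (0 : ℝ), ((r : ℂ) ^ (s - 1) * (Real.exp (-(X ^ 2 * r)) * Real.exp (-(r * t ^ 2)) : ℝ)) *
        (Real.cos (l * t) : ℂ) := by
    intro t
    have hp : 0 < t ^ 2 + X ^ 2 := by positivity
    have h := integral_cpow_mul_exp_neg_mul_Ioi (a := s) (by linarith) hp
    rw [integral_mul_const]
    have : ∀ r : ℝ, (r : ℂ) ^ (s - 1) * cexp (-(((t ^ 2 + X ^ 2 : ℝ) : ℂ) * r)) =
        (r : ℂ) ^ (s - 1) * (Real.exp (-(X ^ 2 * r)) * Real.exp (-(r * t ^ 2)) : ℝ) := by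
      intro r
      rw [← Real.exp_add, ofReal_exp]
      push_cast
      ring_nf
    simp only [this] at h
    rw [h, one_div, ← ofReal_inv, ofReal_inv, inv_cpow _ _ (by
      rw [arg_ofReal_of_nonneg hp.le]; exact Real.pi_pos.ne), cpow_neg]
    ring
  have hint : Integrable (Function.uncurry fun (t r : ℝ) => ((r : ℂ) ^ (s - 1) *
      (Real.exp (-(X ^ 2 * r)) * Real.exp (-(r * t ^ 2)) : ℝ)) * (Real.cos (l * t) : ℂ))
      ((volume.restrict (Ioi 0)).prod (volume.restrict (Ioi (0 : ℝ)))) := by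
    refine Integrable.mul_bdd (f := fun q : ℝ × ℝ => ((q.2 : ℂ) ^ (s - 1) *
      (Real.exp (-(X ^ 2 * q.2)) * Real.exp (-(q.2 * q.1 ^ 2)) : ℝ)))
      (g := fun q : ℝ × ℝ => (Real.cos (l * q.1) : ℂ)) (c := 1) ?_ ?_ ?_
    · rw [integrable_prod_iff' (by
        apply Continuous.aestronglyMeasurable
        have := hc.comp (by fun_prop : Continuous fun q : ℝ × ℝ => q.2)
        fun_prop)]
      constructor
      · filter_upwards [ae_restrict_mem measurableSet_Ioi] with r hr
        have hgi : IntegrableOn (fun t : ℝ => Real.exp (-(r * t ^ 2))) (Ioi 0) := by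
          simpa [neg_mul] using (integrable_exp_neg_mul_sq hr).integrableOn (s := Ioi 0)
        exact Integrable.const_mul (Integrable.ofReal (𝕜 := ℂ) (Integrable.const_mul hgi _)) _
      · have hb : IntegrableOn (fun r : ℝ => Real.sqrt Real.pi / 2 * ‖(r : ℂ) ^ (s - 1 / 2 - 1) *
            (Real.exp (-(X ^ 2 * r)) : ℂ)‖) (Ioi 0) :=
          (integrableOn_cpow_exp (a := s - 1 / 2) (by simp; linarith) (by positivity)).norm.const_mul _
        refine hb.congr_fun (fun r hr => ?_) measurableSet_Ioi
        have hr0 : 0 < r := hr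
        have hgi := integral_gaussian_Ioi r
        have e1 : ∀ t : ℝ, ‖(r : ℂ) ^ (s - 1) *
            (Real.exp (-(X ^ 2 * r)) * Real.exp (-(r * t ^ 2)) : ℝ)‖ =
            r ^ (s.re - 1) * Real.exp (-(X ^ 2 * r)) * Real.exp (-r * t ^ 2) := by
          intro t
          rw [norm_mul, norm_cpow_eq_rpow_re_of_pos hr0, norm_real, Real.norm_of_nonneg (by positivity)]
          simp; ring
        simp only [e1]
        rw [integral_const_mul, hgi, norm_mul, norm_cpow_eq_rpow_re_of_pos hr0, norm_real,
          Real.norm_of_nonneg (by positivity), Real.sqrt_div (by positivity), Real.sqrt_eq_rpow r,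
          show (s - 1 / 2 - 1).re = (s.re - 1) - 1 / 2 by simp; ring, Real.rpow_sub hr0]
        ring
    · apply Continuous.aestronglyMeasurable; fun_prop
    · refine Eventually.of_forall fun q => ?_
      rw [norm_real]; exact Real.abs_cos_le_one _
  rw [← integral_const_mul]
  simp only [h1]
  rw [integral_integral_swap hint, bassetR, ← integral_const_mul]
  refine setIntegral_congr_fun measurableSet_Ioi fun r hr => ?_
  have hr0 : 0 < r := hr
  have hrc : (r : ℂ) ≠ 0 := ofReal_ne_zero.2 hr0.ne'
  have hg := integral_cos_mul_gaussian hr0 l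
  have e1 : ∀ t : ℝ, (r : ℂ) ^ (s - 1) * (Real.exp (-(X ^ 2 * r)) * Real.exp (-(r * t ^ 2)) : ℝ) *
      (Real.cos (l * t) : ℂ) = ((r : ℂ) ^ (s - 1) * (Real.exp (-(X ^ 2 * r)) : ℂ)) *
      ((Real.cos (l * t) * Real.exp (-(r * t ^ 2)) : ℝ) : ℂ) := by
    intro t; push_cast; ring
  simp only [e1]
  rw [integral_const_mul, integral_complex_ofReal, hg, Real.sqrt_div (by positivity), neg_add, Real.exp_add,
    show s - 3 / 2 = (s - 1) - ((1 / 2 : ℝ) : ℂ) by push_cast; ring, cpow_sub (s - 1) _ hrc,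
    ← ofReal_cpow hr0.le, ← Real.sqrt_eq_rpow]
  push_cast
  ring

/-- The right side of Basset's formula: substitute `t = √(1 + w)` and write
`exp (-l X √(1 + w)) / √(1 + w)` by `integral_subordination`. -/
lemma integral_besselK_kernel {s : ℂ} (hs : 1 < s.re) {X l : ℝ} (hX : 0 < X) (hl : 0 < l) :
    ∫ t in Ioi (1 : ℝ), cexp (-((l * X : ℝ) * t)) * ((t ^ 2 - 1 : ℝ) : ℂ) ^ (s - 1) =
      (l : ℂ) / (4 * (Real.sqrt Real.pi : ℂ)) * Gamma s * ((4 / l ^ 2 : ℝ) : ℂ) ^ s * bassetR s X l := by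
  have himg : (fun w : ℝ => Real.sqrt (1 + w)) '' Ioi 0 = Ioi 1 := by
    ext τ
    constructor
    · rintro ⟨w, hw, rfl⟩
      have hw0 : 0 < w := hw
      simp only [mem_Ioi]
      rw [Real.lt_sqrt (by norm_num)]; linarith
    · intro hτ
      have hτ0 : 1 < τ := hτ
      refine ⟨τ ^ 2 - 1, by simp only [mem_Ioi]; nlinarith, ?_⟩
      beta_reduce
      rw [add_sub_cancel, Real.sqrt_sq (by linarith)]
  have hd : ∀ w ∈ Ioi (0 : ℝ), HasDerivWithinAt (fun w : ℝ => Real.sqrt (1 + w))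
      (1 / (2 * Real.sqrt (1 + w))) (Ioi 0) w := by
    intro w hw
    have hw0 : 0 < w := hw
    exact (((hasDerivAt_id w).const_add 1).sqrt (by simp only [id]; linarith)).hasDerivWithinAt
  have hinj : InjOn (fun w : ℝ => Real.sqrt (1 + w)) (Ioi 0) := by
    intro u hu w hw h
    have hu0 : 0 < u := hu
    have hw0 : 0 < w := hw
    have := (Real.sqrt_inj (by linarith) (by linarith)).1 h
    linarith
  rw [← himg, integral_image_eq_integral_abs_deriv_smul measurableSet_Ioi hd hinj]
  have hA : ∀ w ∈ Ioi (0 : ℝ), |1 / (2 * Real.sqrt (1 + w))| • (cexp (-((l * X : ℝ) *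
      (Real.sqrt (1 + w) : ℝ))) * (((Real.sqrt (1 + w)) ^ 2 - 1 : ℝ) : ℂ) ^ (s - 1)) =
      ∫ r in Ioi (0 : ℝ), (l : ℂ) / (4 * (Real.sqrt Real.pi : ℂ)) * ((w : ℂ) ^ (s - 1) *
        ((r ^ (-3 / 2 : ℝ) * Real.exp (-(X ^ 2 * r + l ^ 2 / (4 * r))) *
          Real.exp (-(l ^ 2 / (4 * r) * w)) : ℝ) : ℂ)) := by
    intro w hw
    have hw0 : 0 < w := hw
    have hq : 0 < Real.sqrt (1 + w) := Real.sqrt_pos.2 (by linarith)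
    have hq2 : Real.sqrt (1 + w) ^ 2 = 1 + w := Real.sq_sqrt (by linarith)
    have h := integral_subordination hX (show 0 < l * Real.sqrt (1 + w) / 2 by positivity)
    have hcg : ∫ r in Ioi (0 : ℝ), r ^ (-3 / 2 : ℝ) *
        Real.exp (-(X ^ 2 * r + (l * Real.sqrt (1 + w) / 2) ^ 2 / r)) =
        ∫ r in Ioi (0 : ℝ), r ^ (-3 / 2 : ℝ) * Real.exp (-(X ^ 2 * r + l ^ 2 / (4 * r))) *
          Real.exp (-(l ^ 2 / (4 * r) * w)) := by
      refine setIntegral_congr_fun measurableSet_Ioi fun r hr => ?_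
      have hr0 : r ≠ 0 := ne_of_gt hr
      rw [mul_assoc, ← Real.exp_add, div_pow, mul_pow, hq2]
      congr 2
      field_simp
      ring
    rw [hcg] at h
    rw [integral_const_mul, integral_const_mul, integral_complex_ofReal, h, hq2, abs_of_pos (by positivity),
      real_smul, add_sub_cancel_left, show (-(((l * X : ℝ) : ℂ) * (Real.sqrt (1 + w) : ℝ))) =
      ((-(2 * X * (l * Real.sqrt (1 + w) / 2)) : ℝ) : ℂ) by push_cast; ring, ← ofReal_exp]
    have hpi : (Real.sqrt Real.pi : ℂ) ≠ 0 := ofReal_ne_zero.2 (by positivity)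
    have hlc : (l : ℂ) ≠ 0 := ofReal_ne_zero.2 hl.ne'
    have hqc : (Real.sqrt (1 + w) : ℂ) ≠ 0 := ofReal_ne_zero.2 hq.ne'
    simp only [ofReal_mul, ofReal_div, ofReal_one, ofReal_ofNat]
    field_simp
    ring
  rw [setIntegral_congr_fun measurableSet_Ioi hA]
  have hint : Integrable (Function.uncurry fun (w r : ℝ) => (l : ℂ) / (4 * (Real.sqrt Real.pi : ℂ)) *
      ((w : ℂ) ^ (s - 1) * ((r ^ (-3 / 2 : ℝ) * Real.exp (-(X ^ 2 * r + l ^ 2 / (4 * r))) *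
          Real.exp (-(l ^ 2 / (4 * r) * w)) : ℝ) : ℂ)))
      ((volume.restrict (Ioi 0)).prod (volume.restrict (Ioi (0 : ℝ)))) := by
    refine Integrable.const_mul (f := fun q : ℝ × ℝ => ((q.1 : ℂ) ^ (s - 1) *
      ((q.2 ^ (-3 / 2 : ℝ) * Real.exp (-(X ^ 2 * q.2 + l ^ 2 / (4 * q.2))) *
          Real.exp (-(l ^ 2 / (4 * q.2) * q.1)) : ℝ) : ℂ))) ?_ _
    rw [integrable_prod_iff' (by
      apply Measurable.aestronglyMeasurable
      fun_prop)]
    constructor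
    · filter_upwards [ae_restrict_mem measurableSet_Ioi] with r hr
      have hr0 : 0 < r := hr
      have := (integrableOn_cpow_exp (a := s) (by linarith) (show 0 < l ^ 2 / (4 * r) by positivity)).const_mul
        ((r ^ (-3 / 2 : ℝ) * Real.exp (-(X ^ 2 * r + l ^ 2 / (4 * r))) : ℝ) : ℂ)
      refine this.congr (Eventually.of_forall fun w => ?_)
      push_cast; ring
    · have hb : IntegrableOn (fun r : ℝ => Real.Gamma s.re * (4 / l ^ 2) ^ s.re *
          ‖(r : ℂ) ^ (s - 1 / 2 - 1) * (Real.exp (-(X ^ 2 * r)) : ℂ)‖) (Ioi 0) :=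
        (integrableOn_cpow_exp (a := s - 1 / 2) (by simp; linarith) (by positivity)).norm.const_mul _
      have hG : 0 ≤ Real.Gamma s.re := (Real.Gamma_pos_of_pos (by linarith)).le
      refine hb.mono' ?_ ?_
      · apply AEStronglyMeasurable.integral_prod_right' (f := fun q : ℝ × ℝ => ‖((q.2 : ℂ) ^ (s - 1) *
          ((q.1 ^ (-3 / 2 : ℝ) * Real.exp (-(X ^ 2 * q.1 + l ^ 2 / (4 * q.1))) *
          Real.exp (-(l ^ 2 / (4 * q.1) * q.2)) : ℝ) : ℂ))‖)
        apply Measurable.aestronglyMeasurable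
        fun_prop
      · filter_upwards [ae_restrict_mem measurableSet_Ioi] with r hr
        have hr0 : 0 < r := hr
        have hcg : ∫ w in Ioi (0 : ℝ), ‖(w : ℂ) ^ (s - 1) *
            ((r ^ (-3 / 2 : ℝ) * Real.exp (-(X ^ 2 * r + l ^ 2 / (4 * r))) *
              Real.exp (-(l ^ 2 / (4 * r) * w)) : ℝ) : ℂ)‖ =
            ∫ w in Ioi (0 : ℝ), r ^ (-3 / 2 : ℝ) * Real.exp (-(X ^ 2 * r + l ^ 2 / (4 * r))) *
              (w ^ (s.re - 1) * Real.exp (-(l ^ 2 / (4 * r) * w))) := by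
          refine setIntegral_congr_fun measurableSet_Ioi fun w hw => ?_
          have hw0 : 0 < w := hw
          rw [norm_mul, norm_cpow_eq_rpow_re_of_pos hw0, norm_real, Real.norm_of_nonneg (by positivity)]
          simp; ring
        rw [hcg, integral_const_mul, Real.integral_rpow_mul_exp_neg_mul_Ioi (by linarith) (by positivity),
          Real.norm_of_nonneg (by positivity), norm_mul, norm_cpow_eq_rpow_re_of_pos hr0, norm_real,
          Real.norm_of_nonneg (Real.exp_pos _).le,
          show (s - 1 / 2 - 1).re = (-3 / 2) + s.re by simp; ring, Real.rpow_add hr0,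
          show 1 / (l ^ 2 / (4 * r)) = 4 / l ^ 2 * r by field_simp, Real.mul_rpow (by positivity) hr0.le]
        have : Real.exp (-(X ^ 2 * r + l ^ 2 / (4 * r))) ≤ Real.exp (-(X ^ 2 * r)) := by
          rw [Real.exp_le_exp]
          have : 0 < l ^ 2 / (4 * r) := by positivity
          linarith
        calc _ = Real.Gamma s.re * (4 / l ^ 2) ^ s.re * (r ^ (-3 / 2 : ℝ) * r ^ s.re) *
              Real.exp (-(X ^ 2 * r + l ^ 2 / (4 * r))) := by ring
          _ ≤ Real.Gamma s.re * (4 / l ^ 2) ^ s.re * (r ^ (-3 / 2 : ℝ) * r ^ s.re) *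
              Real.exp (-(X ^ 2 * r)) := by gcongr
          _ = _ := by ring
  rw [integral_integral_swap hint, bassetR, ← integral_const_mul]
  refine setIntegral_congr_fun measurableSet_Ioi fun r hr => ?_
  have hr0 : 0 < r := hr
  have hrc : (r : ℂ) ≠ 0 := ofReal_ne_zero.2 hr0.ne'
  have hg := integral_cpow_mul_exp_neg_mul_Ioi (a := s) (by linarith) (show 0 < l ^ 2 / (4 * r) by positivity)
  have e1 : ∀ w : ℝ, (l : ℂ) / (4 * (Real.sqrt Real.pi : ℂ)) * ((w : ℂ) ^ (s - 1) *
      ((r ^ (-3 / 2 : ℝ) * Real.exp (-(X ^ 2 * r + l ^ 2 / (4 * r))) *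
          Real.exp (-(l ^ 2 / (4 * r) * w)) : ℝ) : ℂ)) =
      (l : ℂ) / (4 * (Real.sqrt Real.pi : ℂ)) *
      ((r ^ (-3 / 2 : ℝ) * Real.exp (-(X ^ 2 * r + l ^ 2 / (4 * r))) : ℝ) : ℂ) *
      ((w : ℂ) ^ (s - 1) * cexp (-(((l ^ 2 / (4 * r) : ℝ) : ℂ) * w))) := by
    intro w
    rw [ofReal_mul, ofReal_exp (-(l ^ 2 / (4 * r) * w))]
    push_cast; ring
  simp only [e1]
  rw [integral_const_mul, hg, show (1 : ℂ) / ((l ^ 2 / (4 * r) : ℝ) : ℂ) =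
    ((4 / l ^ 2 : ℝ) : ℂ) * (r : ℂ) by push_cast; field_simp,
    mul_cpow_ofReal_nonneg (by positivity) hr0.le,
    show s - 3 / 2 = ((-3 / 2 : ℝ) : ℂ) + s by push_cast; ring, cpow_add _ _ hrc,
    ← ofReal_cpow hr0.le]
  push_cast
  ring

/-- Basset's formula: the cosine transform of `lapPhi s X` is `l^ν K_ν(l X)`. -/
lemma integral_cos_mul_lapPhi {s : ℂ} (hs : 1 < s.re) {X l : ℝ} (hX : 0 < X) (hl : 0 < l) :
    ∫ t in Ioi (0 : ℝ), (Real.cos (l * t) : ℂ) * lapPhi s X t =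
      (l : ℂ) ^ (s - 1 / 2) * besselK (s - 1 / 2) (l * X) := by
  have hG : Gamma s ≠ 0 := Gamma_ne_zero_of_re_pos (by linarith)
  have hpi : (Real.sqrt Real.pi : ℂ) ≠ 0 := ofReal_ne_zero.2 (by positivity)
  have hlc : (l : ℂ) ≠ 0 := ofReal_ne_zero.2 hl.ne'
  have h1 := integral_cos_mul_cpow hs hX l
  have h2 := integral_besselK_kernel hs hX hl
  have h3 : ∀ t : ℝ, (Real.cos (l * t) : ℂ) * lapPhi s X t =
      ((2 * X : ℝ) : ℂ) ^ (s - 1 / 2) / (Real.sqrt Real.pi : ℂ) * (Gamma s *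
        ((Real.cos (l * t) : ℂ) * ((t ^ 2 + X ^ 2 : ℝ) : ℂ) ^ (-s))) := by
    intro t; rw [lapPhi]; ring
  simp only [h3]
  rw [integral_const_mul, integral_const_mul, h1, besselK, show s - 1 / 2 + 1 / 2 = s by ring,
    show s - 1 / 2 - 1 / 2 = s - 1 by ring, h2, two_mul_cpow_eq s hX,
    show l * X / 2 = X / 2 * l by ring, ofReal_mul (X / 2) l,
    mul_cpow_ofReal_nonneg (by positivity) hl.le,
    show (4 / l ^ 2 : ℝ) = 4 * (l⁻¹ * l⁻¹) by field_simp, ofReal_mul 4,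
    mul_cpow_ofReal_nonneg (by norm_num) (by positivity), ofReal_mul l⁻¹,
    mul_cpow_ofReal_nonneg (by positivity) (by positivity), ofReal_inv, inv_cpow _ _ (by
      rw [arg_ofReal_of_nonneg hl.le]; exact Real.pi_pos.ne)]
  have e1 : (l : ℂ) ^ (s - 1 / 2) * (l : ℂ) ^ (s - 1 / 2) * l = (l : ℂ) ^ s * (l : ℂ) ^ s := by
    nth_rewrite 3 [← cpow_one (l : ℂ)]
    rw [← cpow_add _ _ hlc, ← cpow_add _ _ hlc, ← cpow_add _ _ hlc]
    ring_nf
  have e2 : (4 : ℂ) ^ (s - 1) = ((4 : ℝ) : ℂ) ^ s / 4 := by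
    rw [cpow_sub _ _ (by norm_num), cpow_one]; norm_num
  have hls : (l : ℂ) ^ s ≠ 0 := by simp [cpow_eq_zero_iff, hlc]
  rw [e2]
  generalize (l : ℂ) ^ (s - 1 / 2) = L1 at e1 ⊢
  generalize (l : ℂ) ^ s = Ls at e1 hls ⊢
  generalize ((X / 2 : ℝ) : ℂ) ^ (s - 1 / 2) = X1
  generalize bassetR s X l = R
  field_simp
  linear_combination (-X1 * R) * e1

/-- The case `l = 0` of the cosine transform of `lapPhi`, where Basset's formula degenerates. -/
lemma integral_lapPhi {s : ℂ} (hs : 1 < s.re) {X : ℝ} (hX : 0 < X) :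
    ∫ t in Ioi (0 : ℝ), lapPhi s X t =
      ((X / 2 : ℝ) : ℂ) ^ (-(s - 1 / 2)) * Gamma (s - 1 / 2) / 2 := by
  have hpi : (Real.sqrt Real.pi : ℂ) ≠ 0 := ofReal_ne_zero.2 (by positivity)
  have h1 := integral_cos_mul_cpow hs hX 0
  have h3 : ∀ t : ℝ, lapPhi s X t =
      ((2 * X : ℝ) : ℂ) ^ (s - 1 / 2) / (Real.sqrt Real.pi : ℂ) * (Gamma s *
        ((Real.cos (0 * t) : ℂ) * ((t ^ 2 + X ^ 2 : ℝ) : ℂ) ^ (-s))) := by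
    intro t; rw [lapPhi]; simp; ring
  simp only [h3]
  have h4 : bassetR s X 0 = ((1 / X ^ 2 : ℝ) : ℂ) ^ (s - 1 / 2) * Gamma (s - 1 / 2) := by
    have := integral_cpow_mul_exp_neg_mul_Ioi (a := s - 1 / 2) (by simp; linarith)
      (show 0 < X ^ 2 by positivity)
    rw [bassetR, ofReal_div, ofReal_one, ← this]
    congr 1; ext r
    rw [show s - 3 / 2 = s - 1 / 2 - 1 by ring]
    simp
  rw [integral_const_mul, integral_const_mul, h1, h4]
  have e1 : ((X / 2 : ℝ) : ℂ) ^ (-(s - 1 / 2)) = ((2 * X : ℝ) : ℂ) ^ (s - 1 / 2) *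
      ((1 / X ^ 2 : ℝ) : ℂ) ^ (s - 1 / 2) := by
    rw [← mul_cpow_ofReal_nonneg (by positivity) (by positivity), ← ofReal_mul, cpow_neg,
      ← inv_cpow _ _ (by rw [arg_ofReal_of_nonneg (by positivity)]; exact Real.pi_pos.ne), ← ofReal_inv]
    congr 2
    field_simp
  rw [e1]
  field_simp

/-! ### Cosine transforms of the shifted Laplace transform -/

lemma sq_add_sq_mem_slitPlane {X : ℝ} (hX : 0 < X) (t : ℝ) :
    ((t : ℂ) ^ 2 + (X : ℂ) ^ 2) ∈ slitPlane := by
  have : ((t : ℂ) ^ 2 + (X : ℂ) ^ 2) = ((t ^ 2 + X ^ 2 : ℝ) : ℂ) := by push_cast; ring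
  rw [this, ofReal_mem_slitPlane]
  positivity

/-- First derivative of `lapPhi s X`. -/
noncomputable def lapPhi1 (s : ℂ) (X t : ℝ) : ℂ :=
  -2 * s * t / ((t : ℂ) ^ 2 + (X : ℂ) ^ 2) * lapPhi s X t

/-- Second derivative of `lapPhi s X`. -/
noncomputable def lapPhi2 (s : ℂ) (X t : ℝ) : ℂ :=
  (-2 * s / ((t : ℂ) ^ 2 + (X : ℂ) ^ 2) +
    4 * s * (s + 1) * t ^ 2 / ((t : ℂ) ^ 2 + (X : ℂ) ^ 2) ^ 2) * lapPhi s X t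

lemma hasDerivAt_lapPhi (s : ℂ) {X : ℝ} (hX : 0 < X) (t : ℝ) :
    HasDerivAt (lapPhi s X) (lapPhi1 s X t) t := by
  have hm := sq_add_sq_mem_slitPlane hX t
  have h0 := slitPlane_ne_zero hm
  have h1 : HasDerivAt (fun z : ℂ => z ^ 2 + (X : ℂ) ^ 2) (2 * (t : ℂ)) (t : ℂ) := by
    simpa using ((hasDerivAt_id (t : ℂ)).pow 2).add_const ((X : ℂ) ^ 2)
  have h2 := ((h1.cpow_const (c := -s) hm).const_mul
    (((2 * X : ℝ) : ℂ) ^ (s - 1 / 2) * Gamma s / (Real.sqrt Real.pi : ℂ))).comp_ofReal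
  have h3 : (fun t : ℝ => ((2 * X : ℝ) : ℂ) ^ (s - 1 / 2) * Gamma s / (Real.sqrt Real.pi : ℂ) *
      ((t : ℂ) ^ 2 + (X : ℂ) ^ 2) ^ (-s)) = lapPhi s X := by
    ext t; rw [lapPhi]; push_cast; rfl
  rw [h3] at h2
  refine h2.congr_deriv ?_
  rw [lapPhi1, lapPhi, cpow_sub _ _ h0, cpow_one]
  push_cast
  field_simp

lemma hasDerivAt_lapPhi1 (s : ℂ) {X : ℝ} (hX : 0 < X) (t : ℝ) :
    HasDerivAt (lapPhi1 s X) (lapPhi2 s X t) t := by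
  have hm := sq_add_sq_mem_slitPlane hX t
  have h0 := slitPlane_ne_zero hm
  have h1 : HasDerivAt (fun z : ℂ => z ^ 2 + (X : ℂ) ^ 2) (2 * (t : ℂ)) (t : ℂ) := by
    simpa using ((hasDerivAt_id (t : ℂ)).pow 2).add_const ((X : ℂ) ^ 2)
  have h2 := ((((hasDerivAt_id (t : ℂ)).const_mul (-2 * s)).div h1 h0).comp_ofReal).mul
    (hasDerivAt_lapPhi s hX t)
  refine h2.congr_deriv ?_
  simp only [Pi.div_apply, id, lapPhi1, lapPhi2]
  field_simp
  ring

/-- `lapPhi` and its first two derivatives are `O(1 / (1 + t²))`, since `Re s > 1`. -/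
lemma norm_lapPhi_le {s : ℂ} (hs : 1 < s.re) {X : ℝ} (hX : 0 < X) :
    ∃ K : ℝ, 0 ≤ K ∧ ∀ t : ℝ, ‖lapPhi s X t‖ ≤ K * (1 + t ^ 2)⁻¹ ∧
      ‖lapPhi1 s X t‖ ≤ K * (1 + t ^ 2)⁻¹ ∧ ‖lapPhi2 s X t‖ ≤ K * (1 + t ^ 2)⁻¹ := by
  set c : ℂ := ((2 * X : ℝ) : ℂ) ^ (s - 1 / 2) * Gamma s / (Real.sqrt Real.pi : ℂ) with hc
  set K0 : ℝ := ‖c‖ * ((X ^ 2) ^ (1 - s.re) * (1 + 1 / X ^ 2)) with hK0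
  have hK0' : 0 ≤ K0 := by positivity
  have hb0 : ∀ t : ℝ, ‖lapPhi s X t‖ ≤ K0 * (1 + t ^ 2)⁻¹ := by
    intro t
    have hr : 0 < t ^ 2 + X ^ 2 := by positivity
    rw [lapPhi, norm_mul, ← hc, norm_cpow_eq_rpow_re_of_pos hr, neg_re, hK0, mul_assoc]
    gcongr
    rw [show -s.re = (1 - s.re) + -1 by ring, Real.rpow_add hr, Real.rpow_neg_one, mul_assoc]
    have h1 : (t ^ 2 + X ^ 2) ^ (1 - s.re) ≤ (X ^ 2) ^ (1 - s.re) :=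
      Real.rpow_le_rpow_of_nonpos (by positivity) (by nlinarith [sq_nonneg t]) (by linarith)
    have h2 : (t ^ 2 + X ^ 2)⁻¹ ≤ (1 + 1 / X ^ 2) * (1 + t ^ 2)⁻¹ := by
      rw [← div_eq_mul_inv, inv_eq_one_div, div_le_div_iff₀ hr (by positivity)]
      have : (1 + 1 / X ^ 2) * (t ^ 2 + X ^ 2) = 1 + t ^ 2 + (t ^ 2 / X ^ 2 + X ^ 2) := by
        field_simp; ring
      rw [this]
      have : 0 ≤ t ^ 2 / X ^ 2 + X ^ 2 := by positivity
      linarith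
    gcongr
  have hrn : ∀ t : ℝ, ‖((t : ℂ) ^ 2 + (X : ℂ) ^ 2)‖ = t ^ 2 + X ^ 2 := by
    intro t
    have : ((t : ℂ) ^ 2 + (X : ℂ) ^ 2) = ((t ^ 2 + X ^ 2 : ℝ) : ℂ) := by push_cast; ring
    rw [this, norm_real, Real.norm_of_nonneg (by positivity)]
  set K1 : ℝ := 2 * ‖s‖ / X
  set K2 : ℝ := 2 * ‖s‖ / X ^ 2 + 4 * ‖s‖ * ‖s + 1‖ / X ^ 2
  have hK1 : 0 ≤ K1 := by positivity
  have hK2 : 0 ≤ K2 := by positivity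
  have hm : ∀ t : ℝ, 0 ≤ (1 + t ^ 2)⁻¹ := fun t => by positivity
  refine ⟨(1 + K1 + K2) * K0, by positivity, fun t => ⟨?_, ?_, ?_⟩⟩
  · refine (hb0 t).trans ?_
    gcongr
    nlinarith [mul_nonneg hK1 hK0', mul_nonneg hK2 hK0']
  · rw [lapPhi1, norm_mul]
    have h1 : ‖-2 * s * t / ((t : ℂ) ^ 2 + (X : ℂ) ^ 2)‖ ≤ K1 := by
      rw [norm_div, hrn, div_le_div_iff₀ (by positivity) hX]
      simp only [norm_mul, norm_neg, norm_ofNat, norm_real, Real.norm_eq_abs]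
      have : |t| * X ≤ t ^ 2 + X ^ 2 := by nlinarith [sq_nonneg (|t| - X), sq_abs t, abs_nonneg t, sq_nonneg (|t| + X)]
      rw [mul_assoc]; gcongr
    calc _ ≤ K1 * (K0 * (1 + t ^ 2)⁻¹) := mul_le_mul h1 (hb0 t) (norm_nonneg _) hK1
      _ ≤ _ := by rw [mul_assoc _ K0]; gcongr; linarith
  · rw [lapPhi2, norm_mul]
    have h1 : ‖(-2 * s / ((t : ℂ) ^ 2 + (X : ℂ) ^ 2) +
        4 * s * (s + 1) * t ^ 2 / ((t : ℂ) ^ 2 + (X : ℂ) ^ 2) ^ 2)‖ ≤ K2 := by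
      refine (norm_add_le _ _).trans (add_le_add ?_ ?_)
      · rw [norm_div, hrn]
        simp only [norm_mul, norm_neg, norm_ofNat]
        gcongr
        nlinarith [sq_nonneg t]
      · rw [norm_div, norm_pow, hrn, div_le_div_iff₀ (by positivity) (by positivity)]
        simp only [norm_mul, norm_pow, norm_ofNat, norm_real, Real.norm_eq_abs, sq_abs]
        have : t ^ 2 * X ^ 2 ≤ (t ^ 2 + X ^ 2) ^ 2 := by nlinarith [sq_nonneg (t ^ 2), sq_nonneg (X ^ 2), mul_nonneg (sq_nonneg t) (sq_nonneg X)]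
        rw [mul_assoc]; gcongr
    calc _ ≤ K2 * (K0 * (1 + t ^ 2)⁻¹) := mul_le_mul h1 (hb0 t) (norm_nonneg _) hK2
      _ ≤ _ := by rw [mul_assoc _ K0]; gcongr; linarith

lemma continuous_lapPhi (s : ℂ) {X : ℝ} (hX : 0 < X) : Continuous (lapPhi s X) :=
  continuous_iff_continuousAt.2 fun t => (hasDerivAt_lapPhi s hX t).continuousAt

lemma continuous_lapPhi2 (s : ℂ) {X : ℝ} (hX : 0 < X) : Continuous (lapPhi2 s X) := by
  have h := continuous_lapPhi s hX
  have h0 : ∀ t : ℝ, ((t : ℂ) ^ 2 + (X : ℂ) ^ 2) ≠ 0 := fun t =>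
    slitPlane_ne_zero (sq_add_sq_mem_slitPlane hX t)
  have h0' : ∀ t : ℝ, ((t : ℂ) ^ 2 + (X : ℂ) ^ 2) ^ 2 ≠ 0 := fun t => pow_ne_zero _ (h0 t)
  unfold lapPhi2
  fun_prop (disch := assumption)

/-- A function bounded by `K / (1 + t²)` stays so after a shift by `e ≥ 0` on `(0, ∞)`. -/
lemma shift_bound {K e t : ℝ} (hK : 0 ≤ K) (he : 0 ≤ e) (ht : 0 ≤ t) :
    K * (1 + (t + e) ^ 2)⁻¹ ≤ K * (1 + t ^ 2)⁻¹ := by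
  gcongr
  linarith

lemma integrableOn_of_inv_bound {F : ℝ → ℂ} (hF : Continuous F) {K : ℝ}
    (h : ∀ t : ℝ, 0 < t → ‖F t‖ ≤ K * (1 + t ^ 2)⁻¹) : IntegrableOn F (Ioi 0) := by
  refine (integrable_inv_one_add_sq.integrableOn.const_mul K).mono'
    hF.aestronglyMeasurable.restrict ?_
  filter_upwards [ae_restrict_mem measurableSet_Ioi] with t ht using h t ht

lemma tendsto_zero_of_inv_bound {F : ℝ → ℂ} {K : ℝ}
    (h : ∀ t : ℝ, 0 < t → ‖F t‖ ≤ K * (1 + t ^ 2)⁻¹) : Tendsto F atTop (𝓝 0) := by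
  have h1 : Tendsto (fun t : ℝ => K * (1 + t ^ 2)⁻¹) atTop (𝓝 (K * 0)) := by
    apply Tendsto.const_mul
    apply tendsto_inv_atTop_zero.comp
    exact tendsto_atTop_add_const_left _ _ (tendsto_pow_atTop two_ne_zero)
  rw [mul_zero] at h1
  refine squeeze_zero_norm' ?_ h1
  filter_upwards [eventually_gt_atTop 0] with t ht using h t ht

/-- The cosine transform of `lapPhi s X` shifted by `e`. -/
noncomputable def cosPhi (s : ℂ) (X e l : ℝ) : ℂ :=
  ∫ t in Ioi (0 : ℝ), (Real.cos (l * t) : ℂ) * lapPhi s X (t + e)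

/-- Two integrations by parts bound the cosine transform by `K / l²`, uniformly in the shift. -/
lemma norm_cosPhi_le {s : ℂ} (hs : 1 < s.re) {X : ℝ} (hX : 0 < X) :
    ∃ K : ℝ, ∀ e : ℝ, 0 ≤ e → ∀ l : ℝ, 0 < l → ‖cosPhi s X e l‖ ≤ K * (1 / l ^ 2) := by
  obtain ⟨K, hK, hb⟩ := norm_lapPhi_le hs hX
  refine ⟨K + ∫ t in Ioi (0 : ℝ), K * (1 + t ^ 2)⁻¹, fun e he l hl => ?_⟩
  have hF : ∀ t : ℝ, HasDerivAt (fun t => lapPhi s X (t + e)) (lapPhi1 s X (t + e)) t := fun t =>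
    (hasDerivAt_lapPhi s hX (t + e)).comp_add_const t e
  have hF1 : ∀ t : ℝ, HasDerivAt (fun t => lapPhi1 s X (t + e)) (lapPhi2 s X (t + e)) t := fun t =>
    (hasDerivAt_lapPhi1 s hX (t + e)).comp_add_const t e
  have b0 : ∀ t : ℝ, 0 < t → ‖lapPhi s X (t + e)‖ ≤ K * (1 + t ^ 2)⁻¹ := fun t ht =>
    (hb (t + e)).1.trans (shift_bound hK he ht.le)
  have b1 : ∀ t : ℝ, 0 < t → ‖lapPhi1 s X (t + e)‖ ≤ K * (1 + t ^ 2)⁻¹ := fun t ht =>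
    (hb (t + e)).2.1.trans (shift_bound hK he ht.le)
  have b2 : ∀ t : ℝ, 0 < t → ‖lapPhi2 s X (t + e)‖ ≤ K * (1 + t ^ 2)⁻¹ := fun t ht =>
    (hb (t + e)).2.2.trans (shift_bound hK he ht.le)
  have hcosn : ∀ t : ℝ, ‖(Real.cos (l * t) : ℂ)‖ ≤ 1 := fun t => by
    rw [norm_real]; exact Real.abs_cos_le_one _
  have hsinn : ∀ t : ℝ, ‖(Real.sin (l * t) : ℂ)‖ ≤ 1 := fun t => by
    rw [norm_real]; exact Real.abs_sin_le_one _
  have mulb : ∀ (a b : ℂ) (M : ℝ), ‖a‖ ≤ 1 → ‖b‖ ≤ M → ‖a * b‖ ≤ M := fun a b M ha hb => by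
    rw [norm_mul]; nlinarith [norm_nonneg a, norm_nonneg b]
  have hc0 : Continuous fun t => lapPhi s X (t + e) :=
    (continuous_lapPhi s hX).comp (by fun_prop)
  have hc2 : Continuous fun t => lapPhi2 s X (t + e) :=
    (continuous_lapPhi2 s hX).comp (by fun_prop)
  have i0 : IntegrableOn (fun t : ℝ => (Real.cos (l * t) : ℂ) * lapPhi s X (t + e)) (Ioi 0) :=
    integrableOn_of_inv_bound (by fun_prop) fun t ht => mulb _ _ _ (hcosn t) (b0 t ht)
  have i2 : IntegrableOn (fun t : ℝ => (Real.cos (l * t) : ℂ) * lapPhi2 s X (t + e)) (Ioi 0) :=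
    integrableOn_of_inv_bound (by fun_prop) fun t ht => mulb _ _ _ (hcosn t) (b2 t ht)
  set P : ℝ → ℂ := fun t => (Real.cos (l * t) : ℂ) * lapPhi1 s X (t + e) +
    l * ((Real.sin (l * t) : ℂ) * lapPhi s X (t + e)) with hP
  have hcos : ∀ t : ℝ, HasDerivAt (fun t : ℝ => (Real.cos (l * t) : ℂ))
      (-(l * (Real.sin (l * t) : ℂ))) t := fun t => by
    have := ((((hasDerivAt_id t).const_mul l).cos).ofReal_comp)
    exact this.congr_deriv (by simp; ring)
  have hsin : ∀ t : ℝ, HasDerivAt (fun t : ℝ => (Real.sin (l * t) : ℂ))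
      (l * (Real.cos (l * t) : ℂ)) t := fun t => by
    have := ((((hasDerivAt_id t).const_mul l).sin).ofReal_comp)
    exact this.congr_deriv (by simp; ring)
  have hPd : ∀ t : ℝ, HasDerivAt P ((Real.cos (l * t) : ℂ) * lapPhi2 s X (t + e) +
      (l : ℂ) ^ 2 * ((Real.cos (l * t) : ℂ) * lapPhi s X (t + e))) t := fun t =>
    (((hcos t).mul (hF1 t)).add (((hsin t).mul (hF t)).const_mul (l : ℂ))).congr_deriv (by ring)
  have hlim : Tendsto P atTop (𝓝 0) := by
    have t1 : Tendsto (fun t : ℝ => (Real.cos (l * t) : ℂ) * lapPhi1 s X (t + e)) atTop (𝓝 0) :=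
      tendsto_zero_of_inv_bound fun t ht => mulb _ _ _ (hcosn t) (b1 t ht)
    have t2 : Tendsto (fun t : ℝ => (Real.sin (l * t) : ℂ) * lapPhi s X (t + e)) atTop (𝓝 0) :=
      tendsto_zero_of_inv_bound fun t ht => mulb _ _ _ (hsinn t) (b0 t ht)
    have t3 := t1.add (t2.const_mul (l : ℂ))
    rw [mul_zero, add_zero] at t3
    exact t3
  have key := integral_Ioi_of_hasDerivAt_of_tendsto (hPd 0).continuousAt.continuousWithinAt
    (fun t _ => hPd t) (i2.add (i0.const_mul ((l : ℂ) ^ 2))) hlim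
  rw [integral_add i2 (i0.const_mul ((l : ℂ) ^ 2)), integral_const_mul] at key
  have hP0 : P 0 = lapPhi1 s X e := by simp [hP]
  rw [hP0] at key
  have hval : (l : ℂ) ^ 2 * cosPhi s X e l = -lapPhi1 s X e -
      ∫ t in Ioi (0 : ℝ), (Real.cos (l * t) : ℂ) * lapPhi2 s X (t + e) := by
    rw [cosPhi]; linear_combination key
  have hn1 : ‖lapPhi1 s X e‖ ≤ K := by
    refine (hb e).2.1.trans ?_
    have : (1 + e ^ 2)⁻¹ ≤ 1 := inv_le_one_of_one_le₀ (by nlinarith [sq_nonneg e])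
    nlinarith
  have hn2 : ‖∫ t in Ioi (0 : ℝ), (Real.cos (l * t) : ℂ) * lapPhi2 s X (t + e)‖ ≤
      ∫ t in Ioi (0 : ℝ), K * (1 + t ^ 2)⁻¹ := by
    refine norm_integral_le_of_norm_le (integrable_inv_one_add_sq.integrableOn.const_mul K) ?_
    filter_upwards [ae_restrict_mem measurableSet_Ioi] with t ht
    exact mulb _ _ _ (hcosn t) (b2 t ht)
  have hn : l ^ 2 * ‖cosPhi s X e l‖ ≤ K + ∫ t in Ioi (0 : ℝ), K * (1 + t ^ 2)⁻¹ := by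
    have : l ^ 2 * ‖cosPhi s X e l‖ = ‖(l : ℂ) ^ 2 * cosPhi s X e l‖ := by
      rw [norm_mul, norm_pow, norm_real, Real.norm_of_nonneg hl.le]
    rw [this, hval]
    refine (norm_sub_le _ _).trans (add_le_add ?_ hn2)
    rwa [norm_neg]
  rw [mul_one_div, le_div_iff₀ (by positivity)]
  linarith

lemma tendsto_cosPhi {s : ℂ} (hs : 1 < s.re) {X : ℝ} (hX : 0 < X) (l : ℝ) :
    Tendsto (fun e => cosPhi s X e l) (𝓝[>] 0) (𝓝 (cosPhi s X 0 l)) := by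
  obtain ⟨K, hK, hb⟩ := norm_lapPhi_le hs hX
  have hc := continuous_lapPhi s hX
  refine tendsto_integral_filter_of_dominated_convergence (fun t => K * (1 + t ^ 2)⁻¹) ?_ ?_
    (integrable_inv_one_add_sq.integrableOn.const_mul K) ?_
  · refine Eventually.of_forall fun e => Continuous.aestronglyMeasurable ?_
    fun_prop
  · filter_upwards [self_mem_nhdsWithin] with e he
    filter_upwards [ae_restrict_mem measurableSet_Ioi] with t ht
    rw [norm_mul, norm_real, Real.norm_eq_abs]
    have h1 := Real.abs_cos_le_one (l * t)
    have h2 := (hb (t + e)).1.trans (shift_bound hK (le_of_lt he) (le_of_lt ht))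
    nlinarith [norm_nonneg (lapPhi s X (t + e)), abs_nonneg (Real.cos (l * t))]
  · refine Eventually.of_forall fun t => Tendsto.mono_left ?_ nhdsWithin_le_nhds
    have : Continuous fun e : ℝ => (Real.cos (l * t) : ℂ) * lapPhi s X (t + e) := by fun_prop
    exact this.tendsto 0

/-! ### Termwise integration and removal of the damping -/

lemma integral_cos_mul_exp {y : ℝ} (hy : 0 < y) (l : ℝ) :
    ∫ t in Ioi (0 : ℝ), (Real.cos (l * t) : ℂ) * (Real.exp (-(t * y)) : ℂ) =
      ((y / (y ^ 2 + l ^ 2) : ℝ) : ℂ) := by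
  have ha : (-(y : ℂ) + l * I).re < 0 := by simpa using hy
  have hb : (-(y : ℂ) - l * I).re < 0 := by simpa using hy
  have h1 := integral_exp_mul_complex_Ioi ha 0
  have h2 := integral_exp_mul_complex_Ioi hb 0
  have i1 := integrableOn_exp_mul_complex_Ioi ha 0
  have i2 := integrableOn_exp_mul_complex_Ioi hb 0
  have hfun : ∀ t : ℝ, (Real.cos (l * t) : ℂ) * (Real.exp (-(t * y)) : ℂ) =
      (1 / 2) * (cexp ((-(y : ℂ) + l * I) * t) + cexp ((-(y : ℂ) - l * I) * t)) := by
    intro t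
    rw [show (-(y : ℂ) + l * I) * t = -(t * y) + (l * t) * I by ring,
      show (-(y : ℂ) - l * I) * t = -(t * y) + -(l * t) * I by ring, Complex.exp_add,
      Complex.exp_add]
    push_cast
    rw [Complex.cos]
    ring
  simp only [hfun]
  rw [integral_const_mul, integral_add i1 i2, h1, h2]
  have n1 : (-(y : ℂ) + l * I) ≠ 0 := fun h => by rw [h] at ha; simp at ha
  have n2 : (-(y : ℂ) - l * I) ≠ 0 := fun h => by rw [h] at hb; simp at hb
  have n3 : ((y : ℂ) ^ 2 + (l : ℂ) ^ 2) ≠ 0 := by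
    have : ((y : ℂ) ^ 2 + (l : ℂ) ^ 2) = ((y ^ 2 + l ^ 2 : ℝ) : ℂ) := by push_cast; ring
    rw [this, ofReal_ne_zero]; positivity
  push_cast
  simp only [mul_zero, Complex.exp_zero]
  field_simp
  linear_combination (2 * (y : ℂ) * l ^ 2) * I_sq

/-- The exponentially damped kernel `exp (-e y) y^ν J_ν(X y)`. -/
noncomputable def dampJ (s : ℂ) (X e y : ℝ) : ℂ := (Real.exp (-(e * y)) : ℂ) * besj s X y

lemma aestronglyMeasurable_dampJ {s : ℂ} (hs : 1 < s.re) {X : ℝ} (hX : 0 < X) (e : ℝ) :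
    AEStronglyMeasurable (dampJ s X e) (volume.restrict (Ioi 0)) :=
  ((by fun_prop : Continuous fun y : ℝ => (Real.exp (-(e * y)) : ℂ)).continuousOn.mul
      (continuousOn_besj hs hX)).aestronglyMeasurable measurableSet_Ioi

/-- Integrability of `dampJ` against `1 / y` near `0`, where `dampJ` is of order `y^(2 Re s - 1)`. -/
lemma integrableOn_norm_dampJ_div {s : ℂ} (hs : 1 < s.re) {X e : ℝ} (hX : 0 < X) (he : 0 < e) :
    IntegrableOn (fun y : ℝ => ‖dampJ s X e y‖ * (1 / y)) (Ioi 0) := by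
  have h := (integrableOn_cpow_exp (a := 2 * s - 1) (by simp; linarith) he).norm.const_mul
    (2 * ‖besjC s X‖)
  refine h.mono' ?_ ?_
  · exact (aestronglyMeasurable_dampJ hs hX e).norm.mul
      (by fun_prop : Measurable fun y : ℝ => 1 / y).aestronglyMeasurable
  · filter_upwards [ae_restrict_mem measurableSet_Ioi] with y hy
    have hy0 : 0 < y := hy
    have := norm_besj_le hs hX hy
    rw [norm_mul _ (1 / y), norm_norm, dampJ, norm_mul, norm_mul, norm_cpow_eq_rpow_re_of_pos hy,
      show (2 * s - 1 - 1).re = (2 * s.re - 1) - 1 by simp, Real.rpow_sub_one hy0.ne',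
      Real.norm_of_nonneg (by positivity)]
    calc _ ≤ ‖(Real.exp (-(e * y)) : ℂ)‖ * (2 * ‖besjC s X‖ * y ^ (2 * s.re - 1)) * (1 / y) := by gcongr
      _ = _ := by ring

/-- Fubini's theorem applied to `y / (y² + l²) = ∫ exp (-y t) cos (l t) dt` and the Laplace
transform of `besj`. -/
lemma cosPhi_eq_integral {s : ℂ} (hs : 1 < s.re) {X e : ℝ} (hX : 0 < X) (he : 0 < e) (l : ℝ) :
    cosPhi s X e l = ∫ y in Ioi (0 : ℝ), ((y / (y ^ 2 + l ^ 2) : ℝ) : ℂ) * dampJ s X e y := by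
  have hm := aestronglyMeasurable_dampJ hs hX e
  have hg : Integrable (fun z : ℝ × ℝ => Real.exp (-(z.1 * z.2)) * ‖dampJ s X e z.2‖)
      ((volume.restrict (Ioi 0)).prod (volume.restrict (Ioi 0))) := by
    rw [integrable_prod_iff']
    · constructor
      · filter_upwards [ae_restrict_mem measurableSet_Ioi] with y hy
        have hy0 : 0 < y := hy
        have := integrableOn_exp_mul_Ioi (a := -y) (by linarith) 0
        refine Integrable.mul_const ?_ _
        refine Integrable.congr this (Eventually.of_forall fun t => ?_)
        simp only; ring_nf
      · refine (integrableOn_norm_dampJ_div hs hX he).congr ?_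
        filter_upwards [ae_restrict_mem measurableSet_Ioi] with y hy
        have hy0 : 0 < y := hy
        have h1 := integral_exp_mul_Ioi (a := -y) (by linarith) 0
        have h2 : ∀ t : ℝ, ‖Real.exp (-(t * y)) * ‖dampJ s X e y‖‖ =
            Real.exp (-y * t) * ‖dampJ s X e y‖ := fun t => by
          rw [Real.norm_of_nonneg (by positivity)]; ring_nf
        simp only [h2]
        rw [integral_mul_const, h1]
        simp; ring
    · exact (by fun_prop : Measurable fun z : ℝ × ℝ => Real.exp (-(z.1 * z.2))).aestronglyMeasurable.mul
        (hm.norm.comp_snd)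
  have hf : Integrable (fun z : ℝ × ℝ => (Real.cos (l * z.1) : ℂ) * (Real.exp (-(z.1 * z.2)) : ℂ) *
      dampJ s X e z.2) ((volume.restrict (Ioi 0)).prod (volume.restrict (Ioi 0))) := by
    refine hg.mono' ?_ (Eventually.of_forall fun z => ?_)
    · exact (by fun_prop : Measurable fun z : ℝ × ℝ => (Real.cos (l * z.1) : ℂ) *
        (Real.exp (-(z.1 * z.2)) : ℂ)).aestronglyMeasurable.mul hm.comp_snd
    · rw [norm_mul, norm_mul, norm_real, norm_real, Real.norm_eq_abs, Real.norm_eq_abs,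
        abs_of_pos (Real.exp_pos _)]
      have := Real.abs_cos_le_one (l * z.1)
      gcongr
      exact mul_le_of_le_one_left (Real.exp_pos _).le this
  calc cosPhi s X e l = ∫ t in Ioi (0 : ℝ), ∫ y in Ioi (0 : ℝ),
        (Real.cos (l * t) : ℂ) * (Real.exp (-(t * y)) : ℂ) * dampJ s X e y := by
        rw [cosPhi]
        refine setIntegral_congr_fun measurableSet_Ioi fun t ht => ?_
        have ht0 : 0 < t := ht
        rw [← integral_exp_besj hs hX (add_pos ht0 he), ← integral_const_mul]
        congr 1; ext y
        rw [dampJ, show -((t + e) * y) = -(t * y) + -(e * y) by ring, Real.exp_add]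
        push_cast; ring
    _ = ∫ y in Ioi (0 : ℝ), ∫ t in Ioi (0 : ℝ),
        (Real.cos (l * t) : ℂ) * (Real.exp (-(t * y)) : ℂ) * dampJ s X e y :=
        integral_integral_swap hf
    _ = _ := by
        refine setIntegral_congr_fun measurableSet_Ioi fun y hy => ?_
        rw [integral_mul_const, integral_cos_mul_exp hy]

lemma measurable_koshG (p : ℝ) : Measurable (koshG p) := by
  unfold koshG
  fun_prop

lemma integrableOn_koshG_mul {p : ℝ} (hp : 0 < p) {s : ℂ} (hs : 1 < s.re) {X e : ℝ} (hX : 0 < X)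
    (he : 0 < e) : IntegrableOn (fun y : ℝ => (koshG p y : ℂ) * dampJ s X e y) (Ioi 0) := by
  refine (integrableOn_norm_dampJ_div hs hX he).mono' ?_ ?_
  · exact (measurable_ofReal.comp (measurable_koshG p)).aestronglyMeasurable.mul
      (aestronglyMeasurable_dampJ hs hX e)
  · filter_upwards [ae_restrict_mem measurableSet_Ioi] with y hy
    have hy0 : 0 < y := hy
    have h1 : |koshG p y| ≤ 1 / y := by
      refine (abs_koshG_le hp hy0).trans ?_
      have h2 : Real.exp (-(Real.pi * y)) ≤ 1 := Real.exp_le_one_iff.2 (by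
        have := Real.pi_pos; nlinarith)
      have h3 := Real.pi_gt_three
      gcongr
      nlinarith
    rw [norm_mul, norm_real, Real.norm_eq_abs, mul_comm]
    gcongr

/-- The partial-fraction expansion of `koshG`, integrated termwise against `dampJ`. -/
lemma IsKosh.hasSum_cosPhi {p : ℝ} (hp : 0 < p) {lam : ℕ → ℝ} (h : IsKosh p lam) {s : ℂ}
    (hs : 1 < s.re) {X e : ℝ} (hX : 0 < X) (he : 0 < e) :
    HasSum (fun n : ℕ => (koshW p (lam (n + 1)) : ℂ) * cosPhi s X e (lam (n + 1)))
      (Real.pi * (∫ y in Ioi (0 : ℝ), (koshG p y : ℂ) * dampJ s X e y) +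
        Real.pi / 2 * lapPhi s X e - (koshW p 0 : ℂ) / 2 * cosPhi s X e 0) := by
  have hm := aestronglyMeasurable_dampJ hs hX e
  have iG := integrableOn_koshG_mul hp hs hX he
  have iJ : IntegrableOn (dampJ s X e) (Ioi 0) := integrableOn_exp_besj hs hX he
  have iD := integrableOn_norm_dampJ_div hs hX he
  have iD' : IntegrableOn (fun y : ℝ => ((1 / y : ℝ) : ℂ) * dampJ s X e y) (Ioi 0) := by
    refine iD.mono' ?_ ?_
    · exact (by fun_prop : Measurable fun y : ℝ => ((1 / y : ℝ) : ℂ)).aestronglyMeasurable.mul hm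
    · filter_upwards [ae_restrict_mem measurableSet_Ioi] with y hy
      have hy0 : 0 < y := hy
      rw [norm_mul, norm_real, Real.norm_of_nonneg (by positivity), mul_comm]
  have key := hasSum_integral_of_dominated_convergence (μ := volume.restrict (Ioi (0 : ℝ)))
    (F := fun (n : ℕ) (y : ℝ) =>
      ((koshW p (lam (n + 1)) * (y / (y ^ 2 + lam (n + 1) ^ 2)) : ℝ) : ℂ) * dampJ s X e y)
    (f := fun y : ℝ => ((Real.pi * koshG p y + Real.pi / 2 - koshW p 0 / 2 * (1 / y) : ℝ) : ℂ) *
      dampJ s X e y)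
    (fun n y => koshW p (lam (n + 1)) * (y / (y ^ 2 + lam (n + 1) ^ 2)) * ‖dampJ s X e y‖)
    ?_ ?_ ?_ ?_ ?_
  · have e1 : ∀ n : ℕ, ∫ y in Ioi (0 : ℝ),
        ((koshW p (lam (n + 1)) * (y / (y ^ 2 + lam (n + 1) ^ 2)) : ℝ) : ℂ) * dampJ s X e y =
        (koshW p (lam (n + 1)) : ℂ) * cosPhi s X e (lam (n + 1)) := by
      intro n
      rw [cosPhi_eq_integral hs hX he, ← integral_const_mul]
      congr 1; ext y
      rw [ofReal_mul, mul_assoc]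
    simp only [e1] at key
    have e2 : cosPhi s X e 0 = ∫ y in Ioi (0 : ℝ), ((1 / y : ℝ) : ℂ) * dampJ s X e y := by
      rw [cosPhi_eq_integral hs hX he]
      refine setIntegral_congr_fun measurableSet_Ioi fun y hy => ?_
      have hy0 : y ≠ 0 := ne_of_gt hy
      have : y / (y ^ 2 + 0 ^ 2) = 1 / y := by field_simp; simp
      simp only [this]
    have e3 : lapPhi s X e = ∫ y in Ioi (0 : ℝ), dampJ s X e y := (integral_exp_besj hs hX he).symm
    have iS : IntegrableOn (fun y : ℝ => (Real.pi : ℂ) * ((koshG p y : ℂ) * dampJ s X e y) +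
        Real.pi / 2 * dampJ s X e y) (Ioi 0) := (iG.const_mul _).add (iJ.const_mul _)
    rw [e2, e3, ← integral_const_mul, ← integral_const_mul, ← integral_const_mul,
      ← integral_add (iG.const_mul _) (iJ.const_mul _),
      ← integral_sub iS (iD'.const_mul _)]
    have e4 : (fun y : ℝ => ((Real.pi * koshG p y + Real.pi / 2 - koshW p 0 / 2 * (1 / y) : ℝ) : ℂ) *
        dampJ s X e y) = fun y : ℝ => (Real.pi : ℂ) * ((koshG p y : ℂ) * dampJ s X e y) +
          Real.pi / 2 * dampJ s X e y - (koshW p 0 : ℂ) / 2 * (((1 / y : ℝ) : ℂ) * dampJ s X e y) := by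
      ext y
      push_cast; ring
    rw [e4] at key
    exact key
  · intro n
    exact (by fun_prop : Measurable fun y : ℝ => ((koshW p (lam (n + 1)) *
      (y / (y ^ 2 + lam (n + 1) ^ 2)) : ℝ) : ℂ)).aestronglyMeasurable.mul hm
  · intro n
    filter_upwards [ae_restrict_mem measurableSet_Ioi] with y hy
    have hy0 : 0 < y := hy
    have := koshW_nonneg hp (lam (n + 1))
    rw [norm_mul, norm_real, Real.norm_of_nonneg (by positivity)]
  · filter_upwards [ae_restrict_mem measurableSet_Ioi] with y hy
    exact (h.hasSum_koshG hp hy).summable.mul_right _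
  · have hI : IntegrableOn (fun y : ℝ => Real.pi * (koshG p y * ‖dampJ s X e y‖) +
        Real.pi / 2 * ‖dampJ s X e y‖ - koshW p 0 / 2 * (‖dampJ s X e y‖ * (1 / y))) (Ioi 0) := by
      have iG' : IntegrableOn (fun y : ℝ => koshG p y * ‖dampJ s X e y‖) (Ioi 0) := by
        refine iG.norm.mono' ((measurable_koshG p).aestronglyMeasurable.mul hm.norm)
          (Eventually.of_forall fun y => ?_)
        rw [norm_mul, norm_mul, norm_norm, norm_real]
      exact ((iG'.const_mul _).add (iJ.norm.const_mul _)).sub (iD.const_mul _)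
    refine hI.congr ?_
    filter_upwards [ae_restrict_mem measurableSet_Ioi] with y hy
    rw [((h.hasSum_koshG hp hy).mul_right ‖dampJ s X e y‖).tsum_eq]
    ring
  · filter_upwards [ae_restrict_mem measurableSet_Ioi] with y hy
    exact (hasSum_ofReal.2 (h.hasSum_koshG hp hy)).mul_right _

/-- The damping factor can be removed in the integral: `koshG` is itself exponentially small. -/
lemma tendsto_integral_koshG {p : ℝ} (hp : 0 < p) {s : ℂ} (hs : 1 < s.re) {X : ℝ} (hX : 0 < X) :
    Tendsto (fun e => ∫ y in Ioi (0 : ℝ), (koshG p y : ℂ) * dampJ s X e y) (𝓝[>] 0)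
      (𝓝 (∫ y in Ioi (0 : ℝ), (koshG p y : ℂ) * besj s X y)) := by
  refine tendsto_integral_filter_of_dominated_convergence
    (fun y => ‖dampJ s X Real.pi y‖ * (1 / y)) ?_ ?_
    (integrableOn_norm_dampJ_div hs hX Real.pi_pos) ?_
  · exact Eventually.of_forall fun e =>
      (measurable_ofReal.comp (measurable_koshG p)).aestronglyMeasurable.mul
        (aestronglyMeasurable_dampJ hs hX e)
  · filter_upwards [self_mem_nhdsWithin] with e he
    have he0 : 0 < e := he
    filter_upwards [ae_restrict_mem measurableSet_Ioi] with y hy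
    have hy0 : 0 < y := hy
    have h1 : |koshG p y| ≤ Real.exp (-(Real.pi * y)) * (1 / y) := by
      refine (abs_koshG_le hp hy0).trans ?_
      rw [mul_one_div]
      have h3 := Real.pi_gt_three
      gcongr
      nlinarith
    have h2 : Real.exp (-(e * y)) ≤ 1 := Real.exp_le_one_iff.2 (by nlinarith)
    simp only [dampJ, norm_mul, norm_real, Real.norm_eq_abs, abs_of_pos (Real.exp_pos _)]
    calc |koshG p y| * (Real.exp (-(e * y)) * ‖besj s X y‖)
        ≤ (Real.exp (-(Real.pi * y)) * (1 / y)) * (1 * ‖besj s X y‖) := by gcongr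
      _ = _ := by ring
  · refine Eventually.of_forall fun y => Tendsto.mono_left ?_ nhdsWithin_le_nhds
    have : Continuous fun e : ℝ => (koshG p y : ℂ) * dampJ s X e y := by
      unfold dampJ; fun_prop
    simpa [dampJ] using this.tendsto 0

lemma summable_one_div_add_half_sq : Summable fun n : ℕ => 1 / ((n : ℝ) + 1 / 2) ^ 2 := by
  have h := (Real.summable_one_div_nat_add_rpow (1 / 2) 2).2 (by norm_num)
  refine h.congr fun n => ?_
  rw [abs_of_pos (by positivity)]
  norm_num

/-- The limit `e → 0+` of `IsKosh.hasSum_cosPhi`. -/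
lemma IsKosh.tsum_cosPhi {p : ℝ} (hp : 0 < p) {lam : ℕ → ℝ} (h : IsKosh p lam) {s : ℂ}
    (hs : 1 < s.re) {X : ℝ} (hX : 0 < X) :
    ∑' n : ℕ, (koshW p (lam (n + 1)) : ℂ) * cosPhi s X 0 (lam (n + 1)) =
      Real.pi * (∫ y in Ioi (0 : ℝ), (koshG p y : ℂ) * besj s X y) +
        Real.pi / 2 * lapPhi s X 0 - (koshW p 0 : ℂ) / 2 * cosPhi s X 0 0 := by
  obtain ⟨K, hK⟩ := norm_cosPhi_le hs hX
  have hl : ∀ n : ℕ, (n : ℝ) + 1 / 2 < lam (n + 1) := fun n => by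
    have := (h (n + 1) (by omega)).1
    push_cast at this; linarith
  have hK0 : 0 ≤ K := by
    have := (norm_nonneg _).trans (hK 0 le_rfl 1 one_pos)
    simpa using this
  have t1 : Tendsto (fun e => ∑' n : ℕ, (koshW p (lam (n + 1)) : ℂ) * cosPhi s X e (lam (n + 1)))
      (𝓝[>] 0) (𝓝 (∑' n : ℕ, (koshW p (lam (n + 1)) : ℂ) * cosPhi s X 0 (lam (n + 1)))) := by
    refine tendsto_tsum_of_dominated_convergence
      (bound := fun n : ℕ => K * (1 / ((n : ℝ) + 1 / 2) ^ 2))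
      (summable_one_div_add_half_sq.mul_left K) (fun n => (tendsto_cosPhi hs hX _).const_mul _) ?_
    filter_upwards [self_mem_nhdsWithin] with e he n
    have hn := hl n
    have hn0 : 0 < lam (n + 1) := by
      have : (0 : ℝ) ≤ n := n.cast_nonneg
      linarith
    rw [norm_mul, norm_real, Real.norm_of_nonneg (koshW_nonneg hp _)]
    calc koshW p (lam (n + 1)) * ‖cosPhi s X e (lam (n + 1))‖
        ≤ 1 * (K * (1 / lam (n + 1) ^ 2)) := by
          gcongr
          · exact koshW_le_one hp _
          · exact hK e (le_of_lt he) _ hn0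
      _ ≤ _ := by rw [one_mul]; gcongr
  have t2 : Tendsto (fun e => (Real.pi : ℂ) * (∫ y in Ioi (0 : ℝ), (koshG p y : ℂ) * dampJ s X e y) +
        Real.pi / 2 * lapPhi s X e - (koshW p 0 : ℂ) / 2 * cosPhi s X e 0) (𝓝[>] 0)
      (𝓝 (Real.pi * (∫ y in Ioi (0 : ℝ), (koshG p y : ℂ) * besj s X y) +
        Real.pi / 2 * lapPhi s X 0 - (koshW p 0 : ℂ) / 2 * cosPhi s X 0 0)) :=
    (((tendsto_integral_koshG hp hs hX).const_mul _).add
      ((((continuous_lapPhi s hX).tendsto 0).mono_left nhdsWithin_le_nhds).const_mul _)).sub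
      ((tendsto_cosPhi hs hX 0).const_mul _)
  refine tendsto_nhds_unique t1 (t2.congr' ?_)
  filter_upwards [self_mem_nhdsWithin] with e he
  exact (h.hasSum_cosPhi hp hs hX he).tsum_eq.symm

/-! ### Evaluation of the constants -/

lemma koshW_zero {p : ℝ} (hp : 0 < p) : koshW p 0 = 1 / (1 + 1 / (Real.pi * p)) := by
  have := Real.pi_pos
  rw [koshW]
  field_simp
  ring

lemma pi_mul_lapPhi_zero (s : ℂ) {x : ℝ} (hx : 0 < x) :
    (Real.pi : ℂ) / 2 * lapPhi s (2 * Real.pi * x) 0 =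
      Gamma s * (Real.pi : ℂ) ^ (-s) * (x : ℂ) ^ (-s - 1 / 2) / 4 := by
  have hpi := Real.pi_pos
  have hpc : (Real.pi : ℂ) ≠ 0 := ofReal_ne_zero.2 hpi.ne'
  have hxc : (x : ℂ) ≠ 0 := ofReal_ne_zero.2 hx.ne'
  have hX : 0 < 2 * Real.pi * x := by positivity
  have h4 : (4 : ℂ) ≠ 0 := by norm_num
  have e1 : ((2 * (2 * Real.pi * x) : ℝ) : ℂ) ^ (s - 1 / 2) =
      (4 : ℂ) ^ (s - 1 / 2) * (Real.pi : ℂ) ^ (s - 1 / 2) * (x : ℂ) ^ (s - 1 / 2) := by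
    rw [show 2 * (2 * Real.pi * x) = 4 * Real.pi * x by ring, ofReal_mul,
      mul_cpow_ofReal_nonneg (by positivity) hx.le, ofReal_mul,
      mul_cpow_ofReal_nonneg (by positivity) hpi.le]
    norm_num
  have e2 : ((0 ^ 2 + (2 * Real.pi * x) ^ 2 : ℝ) : ℂ) ^ (-s) =
      (4 : ℂ) ^ (-s) * ((Real.pi : ℂ) ^ (-s) * (Real.pi : ℂ) ^ (-s)) *
        ((x : ℂ) ^ (-s) * (x : ℂ) ^ (-s)) := by
    rw [show (0 ^ 2 + (2 * Real.pi * x) ^ 2 : ℝ) = 4 * (Real.pi * Real.pi) * (x * x) by ring,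
      ofReal_mul, mul_cpow_ofReal_nonneg (by positivity) (by positivity), ofReal_mul,
      mul_cpow_ofReal_nonneg (by positivity) (by positivity), ofReal_mul Real.pi,
      mul_cpow_ofReal_nonneg hpi.le hpi.le, ofReal_mul x, mul_cpow_ofReal_nonneg hx.le hx.le]
    norm_num
  have e3 : (4 : ℂ) ^ (s - 1 / 2) * (4 : ℂ) ^ (-s) = 1 / 2 := by
    rw [← cpow_add _ _ h4, show s - 1 / 2 + -s = ((-(1 / 2) : ℝ) : ℂ) by push_cast; ring,
      show (4 : ℂ) = ((4 : ℝ) : ℂ) by norm_num, ← ofReal_cpow (by norm_num),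
      Real.rpow_neg (by norm_num), ← Real.sqrt_eq_rpow, show (4 : ℝ) = 2 ^ 2 by norm_num,
      Real.sqrt_sq (by norm_num)]
    norm_num
  have e4 : (x : ℂ) ^ (s - 1 / 2) * ((x : ℂ) ^ (-s) * (x : ℂ) ^ (-s)) = (x : ℂ) ^ (-s - 1 / 2) := by
    rw [← cpow_add _ _ hxc, ← cpow_add _ _ hxc]; ring_nf
  have e5 : (Real.pi : ℂ) * ((Real.pi : ℂ) ^ (s - 1 / 2) * ((Real.pi : ℂ) ^ (-s))) =
      (Real.sqrt Real.pi : ℂ) := by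
    nth_rewrite 1 [← cpow_one (Real.pi : ℂ)]
    rw [← cpow_add _ _ hpc, ← cpow_add _ _ hpc,
      show 1 + (s - 1 / 2 + -s) = ((1 / 2 : ℝ) : ℂ) by push_cast; ring, ← ofReal_cpow hpi.le,
      ← Real.sqrt_eq_rpow]
  have hsq : (Real.sqrt Real.pi : ℂ) ≠ 0 := ofReal_ne_zero.2 (by positivity)
  rw [lapPhi, e1, e2, ← e4]
  generalize (4 : ℂ) ^ (s - 1 / 2) = a1 at *
  generalize (4 : ℂ) ^ (-s) = a2 at *
  generalize (Real.pi : ℂ) ^ (s - 1 / 2) = b1 at *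
  generalize (Real.pi : ℂ) ^ (-s) = b2 at *
  generalize (x : ℂ) ^ (s - 1 / 2) = c1 at *
  generalize (x : ℂ) ^ (-s) = c2 at *
  generalize Gamma s = G at *
  generalize (Real.sqrt Real.pi : ℂ) = q at *
  have hre : (Real.pi : ℂ) / 2 * (a1 * b1 * c1 * G / q * (a2 * (b2 * b2) * (c2 * c2))) =
      (a1 * a2) * (Real.pi * (b1 * b2)) / q * (G * b2 * (c1 * (c2 * c2)) / 2) := by ring
  rw [hre, e3, e5]
  field_simp
  ring

/-- The formula for Koshliakov sequences, with the weights written as `koshW`. -/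
lemma IsKosh.watson {p : ℝ} (hp : 0 < p) {lam : ℕ → ℝ} (h : IsKosh p lam) {x : ℝ} (hx : 0 < x)
    {s : ℂ} (hs : 1 < s.re) :
    (∑' n : ℕ, (koshW p (lam (n + 1)) : ℂ) * ((lam (n + 1) : ℝ) : ℂ) ^ (s - 1 / 2) *
          besselK (s - 1 / 2) (2 * Real.pi * lam (n + 1) * x)) =
      -((Real.pi : ℂ) ^ ((1 : ℂ) / 2 - s) * (x : ℂ) ^ ((1 : ℂ) / 2 - s) / 4) *
          (Gamma (s - 1 / 2) / ((1 + 1 / (Real.pi * p) : ℝ) : ℂ))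
      + Gamma s * (Real.pi : ℂ) ^ (-s) * (x : ℂ) ^ (-s - 1 / 2) / 4
      + (Real.pi : ℂ) *
          ∫ y in Ioi (0 : ℝ),
            (y : ℂ) ^ (s - 1 / 2) * besselJ (s - 1 / 2) (2 * Real.pi * x * y) /
              (((p + y) / (p - y) * Real.exp (2 * Real.pi * y) - 1 : ℝ) : ℂ) := by
  have hpi := Real.pi_pos
  have hX : 0 < 2 * Real.pi * x := by positivity
  have hmain := h.tsum_cosPhi hp hs hX
  have hl : ∀ n : ℕ, 0 < lam (n + 1) := fun n => by
    have := (h (n + 1) (by omega)).1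
    have h0 : (0 : ℝ) ≤ n := n.cast_nonneg
    push_cast at this; linarith
  have e1 : ∀ n : ℕ, (koshW p (lam (n + 1)) : ℂ) * ((lam (n + 1) : ℝ) : ℂ) ^ (s - 1 / 2) *
      besselK (s - 1 / 2) (2 * Real.pi * lam (n + 1) * x) =
      (koshW p (lam (n + 1)) : ℂ) * cosPhi s (2 * Real.pi * x) 0 (lam (n + 1)) := by
    intro n
    rw [cosPhi]
    simp only [add_zero]
    rw [integral_cos_mul_lapPhi hs hX (hl n), mul_assoc,
      show 2 * Real.pi * lam (n + 1) * x = lam (n + 1) * (2 * Real.pi * x) by ring]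
  have e2 : cosPhi s (2 * Real.pi * x) 0 0 =
      (Real.pi : ℂ) ^ ((1 : ℂ) / 2 - s) * (x : ℂ) ^ ((1 : ℂ) / 2 - s) * Gamma (s - 1 / 2) / 2 := by
    rw [cosPhi]
    simp only [add_zero, zero_mul, Real.cos_zero, ofReal_one, one_mul]
    rw [integral_lapPhi hs hX, show 2 * Real.pi * x / 2 = Real.pi * x by ring, ofReal_mul,
      mul_cpow_ofReal_nonneg hpi.le hx.le, neg_sub]
  -- The two integrands differ only at the removable point `y = p`.
  have e3 : ∫ y in Ioi (0 : ℝ), (y : ℂ) ^ (s - 1 / 2) * besselJ (s - 1 / 2) (2 * Real.pi * x * y) /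
        (((p + y) / (p - y) * Real.exp (2 * Real.pi * y) - 1 : ℝ) : ℂ) =
      ∫ y in Ioi (0 : ℝ), (koshG p y : ℂ) * besj s (2 * Real.pi * x) y := by
    refine integral_congr_ae ?_
    filter_upwards [ae_restrict_mem measurableSet_Ioi,
      ae_restrict_of_ae (Measure.ae_ne volume p)] with y hy hyp
    rw [← koshG_eq hp hy hyp, besj]
    push_cast
    ring
  simp only [e1]
  rw [hmain, e2, e3, pi_mul_lapPhi_zero s hx, koshW_zero hp, ofReal_div, ofReal_one]
  ring

end

theorem watson_formula_koshliakov_second_analogue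
    (p : ℝ) (hp : 0 < p) (lam : ℕ → ℝ)
    (hlam : ∀ n : ℕ, 1 ≤ n → (n : ℝ) - 1 / 2 < lam n ∧ lam n < n ∧
      Real.tan (Real.pi * lam n) = -(lam n) / p)
    (x : ℝ) (hx : 0 < x) (s : ℂ) (hs : 1 < s.re) :
    (∑' n : ℕ, (((p ^ 2 + lam (n + 1) ^ 2) / (p * (p + 1 / Real.pi) + lam (n + 1) ^ 2) : ℝ) : ℂ) *
        ((lam (n + 1) : ℝ) : ℂ) ^ (s - 1 / 2) *
          besselK (s - 1 / 2) (2 * Real.pi * lam (n + 1) * x)) =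
      -((Real.pi : ℂ) ^ ((1 : ℂ) / 2 - s) * (x : ℂ) ^ ((1 : ℂ) / 2 - s) / 4) *
          (Complex.Gamma (s - 1 / 2) / ((1 + 1 / (Real.pi * p) : ℝ) : ℂ))
      + Complex.Gamma s * (Real.pi : ℂ) ^ (-s) * (x : ℂ) ^ (-s - 1 / 2) / 4
      + (Real.pi : ℂ) *
          ∫ y in Set.Ioi (0 : ℝ),
            (y : ℂ) ^ (s - 1 / 2) * besselJ (s - 1 / 2) (2 * Real.pi * x * y) /
              (((p + y) / (p - y) * Real.exp (2 * Real.pi * y) - 1 : ℝ) : ℂ) := by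
  exact IsKosh.watson hp (lam := lam) hlam hx hs
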